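/- Let X be a Banach space of analytic functions on 𝔻 in which the analytic polynomials are dense, with limsup_{n→∞} ‖z^n‖_X^{1/n} ≤ 1, and which is continuously embedded in H², and suppose the Cauchy dual X' is continuously embedded in H^p for some p > 0. Then for every inner function ϑ the set X' ∩ ϑ𝒩⁺ := {f ∈ X' : f/ϑ ∈ 𝒩⁺} is weak-star closed in X'. -/

import Mathlib

open MeasureTheory Complex Filter Set Metric Polynomial

noncomputable section

/-- Normalized arc-length measure on the unit circle 𝕋, realized on the
parameter interval `(0, 2π]` via `θ ↦ e^{iθ}`. -/
def arcM : Measure ℝ :=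
  (ENNReal.ofReal (2 * Real.pi))⁻¹ • (volume.restrict (Set.Ioc 0 (2 * Real.pi)))

/-- The open unit disc 𝔻 ⊆ ℂ. -/
def uDisc : Set ℂ := Metric.ball 0 1

/-- The unit circle 𝕋 ⊆ ℂ. -/
def uCircle : Set ℂ := Metric.sphere 0 1

/-- The boundary point `e^{iθ}`. -/
def bpt (θ : ℝ) : ℂ := Complex.exp (θ * Complex.I)

/-- `f` is analytic on the open unit disc. -/
def AnalyticOnDisc (f : ℂ → ℂ) : Prop := DifferentiableOn ℂ f uDisc

/-- The integral mean `∫_𝕋 |f(rζ)|^p dm(ζ)`. -/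
def hMean (p : ℝ) (f : ℂ → ℂ) (r : ℝ) : ℝ := ∫ θ, ‖f ((r : ℂ) * bpt θ)‖ ^ p ∂arcM

/-- Membership in the Hardy space `H^p`, `0 < p < ∞`. -/
def MemHp (p : ℝ) (f : ℂ → ℂ) : Prop :=
  AnalyticOnDisc f ∧ BddAbove (hMean p f '' Set.Ioo 0 1)

/-- The Hardy space (quasi-)norm `‖f‖_{H^p} = (sup_{0<r<1} ∫_𝕋 |f(rζ)|^p dm)^{min(1,1/p)}`. -/
def hardyNorm (p : ℝ) (f : ℂ → ℂ) : ℝ :=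
  sSup (hMean p f '' Set.Ioo 0 1) ^ min 1 (1 / p)

/-- Membership in `H^∞`: bounded analytic functions on 𝔻. -/
def MemHinf (f : ℂ → ℂ) : Prop :=
  AnalyticOnDisc f ∧ ∃ C : ℝ, ∀ z ∈ uDisc, ‖f z‖ ≤ C

/-- `F` is (a representative of) the boundary function of `f` : radial limits a.e. on 𝕋. -/
def BoundaryFn (f : ℂ → ℂ) (F : ℝ → ℂ) : Prop :=
  ∀ᵐ θ ∂arcM, Filter.Tendsto (fun r : ℝ => f ((r : ℂ) * bpt θ))
    (nhdsWithin 1 (Set.Iio 1)) (nhds (F θ))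

/-- `ϑ` is an inner function: bounded analytic with unimodular boundary values a.e. -/
def IsInner (ϑ : ℂ → ℂ) : Prop :=
  MemHinf ϑ ∧ ∃ Θ : ℝ → ℂ, BoundaryFn ϑ Θ ∧ ∀ᵐ θ ∂arcM, ‖Θ θ‖ = 1

/-- The boundary function of `f` lies in `ϑ ⋅ conj(H^p_0)`. -/
def PseudoCont (p : ℝ) (ϑ f : ℂ → ℂ) : Prop :=
  ∃ F Θ G : ℝ → ℂ, ∃ g : ℂ → ℂ,
    BoundaryFn f F ∧ BoundaryFn ϑ Θ ∧ MemHp p g ∧ g 0 = 0 ∧ BoundaryFn g G ∧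
    ∀ᵐ θ ∂arcM, F θ = Θ θ * (starRingEnd ℂ) (G θ)

/-- The boundary function of `f` lies in `ϑ ⋅ conj(H^∞_0)`. -/
def PseudoContInf (ϑ f : ℂ → ℂ) : Prop :=
  ∃ F Θ G : ℝ → ℂ, ∃ g : ℂ → ℂ,
    BoundaryFn f F ∧ BoundaryFn ϑ Θ ∧ MemHinf g ∧ g 0 = 0 ∧ BoundaryFn g G ∧
    ∀ᵐ θ ∂arcM, F θ = Θ θ * (starRingEnd ℂ) (G θ)

/-- `f` extends analytically across the boundary set `S ⊆ 𝕋`. -/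
def ExtendsAcross (f : ℂ → ℂ) (S : Set ℂ) : Prop :=
  ∃ U : Set ℂ, ∃ g : ℂ → ℂ, IsOpen U ∧ S ⊆ U ∧
    DifferentiableOn ℂ g (uDisc ∪ U) ∧ Set.EqOn g f uDisc

/-- The boundary spectrum `σ(ϑ)`: the points of 𝕋 across which `ϑ` admits no
analytic continuation. -/
def bSpectrum (ϑ : ℂ → ℂ) : Set ℂ := {ζ | ζ ∈ uCircle ∧ ¬ ExtendsAcross ϑ {ζ}}

/-- Membership in the space `K^p_ϑ` of pseudocontinuable functions, `0 < p < ∞`: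
`f ∈ H^p`, the boundary function of `f` lies in `ϑ ⋅ conj(H^p_0)`, and `f`
continues analytically across `𝕋 ∖ σ(ϑ)`. -/
def MemKp (p : ℝ) (ϑ f : ℂ → ℂ) : Prop :=
  MemHp p f ∧ PseudoCont p ϑ f ∧ ExtendsAcross f (uCircle \ bSpectrum ϑ)

/-- Membership in `K^∞_ϑ = H^∞ ∩ ϑ ⋅ conj(H^∞_0)`. -/
def MemKinf (ϑ f : ℂ → ℂ) : Prop := MemHinf f ∧ PseudoContInf ϑ f

/-- The backward shift `f ↦ (f - f(0))/z`. -/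
def bShift (f : ℂ → ℂ) : ℂ → ℂ :=
  fun z => if z = 0 then deriv f 0 else (f z - f 0) / z

/-- `X ∩ K^p_ϑ` is dense in `K^p_ϑ` in the `H^p` metric. -/
def DenseInKp (p : ℝ) (ϑ : ℂ → ℂ) (X : Set (ℂ → ℂ)) : Prop :=
  ∀ f : ℂ → ℂ, MemKp p ϑ f → ∀ ε > (0 : ℝ), ∃ g ∈ X, MemKp p ϑ g ∧
    hardyNorm p (fun z => f z - g z) < ε

/-- `X ∩ K^∞_ϑ` is dense in `K^∞_ϑ` in the weak-star topology inherited from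
`L^∞(𝕋, m) = (L¹(𝕋, m))^*`. -/
def WStarDenseKinf (ϑ : ℂ → ℂ) (X : Set (ℂ → ℂ)) : Prop :=
  ∀ f : ℂ → ℂ, MemKinf ϑ f → ∀ F : ℝ → ℂ, BoundaryFn f F →
    ∀ (n : ℕ) (h : Fin n → ℝ → ℂ), (∀ i, Integrable (h i) arcM) → ∀ ε > (0 : ℝ),
      ∃ g ∈ X, MemKinf ϑ g ∧ ∃ G : ℝ → ℂ, BoundaryFn g G ∧
        ∀ i, ‖∫ θ, (F θ - G θ) * h i θ ∂arcM‖ < ε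

/-- The Cauchy dual function `𝓛(Λ)(z) = ∑_n conj(Λ(ζ ↦ ζ^n)) zⁿ` associated to a bounded
functional `Λ` on `X`; here `e n ∈ X` represents the monomial `z ↦ zⁿ`. -/
def cauchyDualFn {X : Type*} [NormedAddCommGroup X] [NormedSpace ℂ X]
    (e : ℕ → X) (Λ : X →L[ℂ] ℂ) : ℂ → ℂ :=
  fun z => ∑' n : ℕ, (starRingEnd ℂ) (Λ (e n)) * z ^ n

/-- The weak-star closure of a set of bounded functionals on `X`: `Λ` belongs to the
closure iff every basic weak-star neighborhood of `Λ` meets the set. -/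
def wstarClosure {X : Type*} [NormedAddCommGroup X] [NormedSpace ℂ X]
    (S : Set (X →L[ℂ] ℂ)) : Set (X →L[ℂ] ℂ) :=
  {Λ | ∀ F : Finset X, ∀ ε > (0 : ℝ), ∃ Λ' ∈ S, ∀ x ∈ F, ‖Λ x - Λ' x‖ < ε}

/-- The set of functionals on `X` whose Cauchy dual function is an analytic polynomial
multiple of `ϑ`. -/
def polyMultiples {X : Type*} [NormedAddCommGroup X] [NormedSpace ℂ X]
    (e : ℕ → X) (ϑ : ℂ → ℂ) : Set (X →L[ℂ] ℂ) :=
  {Λ | ∃ q : Polynomial ℂ, cauchyDualFn e Λ = fun z => ϑ z * q.eval z}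

/-- The `(P)`-property of the pair `(X, ϑ)`: `[ϑ]_{X'} ∩ H² ⊆ ϑ H²`, i.e. every element of
the weak-star closure in the Cauchy dual `X'` of the polynomial multiples of `ϑ` which lies
in `H²` is divisible by `ϑ` in `H²`. -/
def PProperty {X : Type*} [NormedAddCommGroup X] [NormedSpace ℂ X]
    (e : ℕ → X) (ϑ : ℂ → ℂ) : Prop :=
  ∀ Λ ∈ wstarClosure (polyMultiples e ϑ), MemHp 2 (cauchyDualFn e Λ) →
    ∃ h : ℂ → ℂ, MemHp 2 h ∧ ∀ z ∈ uDisc, cauchyDualFn e Λ z = ϑ z * h z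

/-- Membership in the model space `K²_ϑ = H² ∩ ϑ ⋅ conj(H²_0)`. -/
def MemK2 (ϑ f : ℂ → ℂ) : Prop := MemHp 2 f ∧ PseudoCont 2 ϑ f

/-- `F` is an outer function: `F(z) = c exp(∫_𝕋 (ζ+z)/(ζ-z) log w(ζ) dm(ζ))` for a
unimodular constant `c` and a nonnegative `w` on 𝕋 with `log w ∈ L¹(𝕋, m)`. -/
def IsOuter (F : ℂ → ℂ) : Prop :=
  ∃ (c : ℂ) (w : ℝ → ℝ), ‖c‖ = 1 ∧ (∀ θ, 0 ≤ w θ) ∧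
    Integrable (fun θ => Real.log (w θ)) arcM ∧
    ∀ z ∈ uDisc, F z =
      c * Complex.exp (∫ θ, ((bpt θ + z) / (bpt θ - z)) * (Real.log (w θ) : ℂ) ∂arcM)

/-- `h` belongs to the Smirnov class `𝒩⁺`: `h` is analytic on 𝔻 and `h = u/v` with
`u, v ∈ H^∞` and `v` outer. -/
def MemSmirnov (h : ℂ → ℂ) : Prop :=
  AnalyticOnDisc h ∧ ∃ u v : ℂ → ℂ, MemHinf u ∧ MemHinf v ∧ IsOuter v ∧
    ∀ z ∈ uDisc, h z * v z = u z

/-!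
By the Krein–Šmulian theorem it suffices that `X' ∩ ϑ𝒩⁺` meets every closed ball in a weak-star
closed set. Point evaluations on the disc are weak-star continuous on `X'`: if the power series of
every `Λ ∈ X*` converges on the disc, then `rⁿ‖zⁿ‖_X` is bounded for each `r < 1` by the uniform
boundedness principle. So on a ball one takes a pointwise limit `f` of functions `ϑ h` with
`h ∈ 𝒩⁺` and `‖ϑ h‖_{H^p}` bounded. Since `|ϑ| = 1` a.e. on the circle and `h ∈ 𝒩⁺`, `log |h|` is
dominated by the Poisson integral of the boundary values of `log⁺ |ϑ h|`, and
`(log⁺ t)² ≤ (4 / p²) tᵖ` bounds these in `L²`. Along an ultrafilter the majorants converge weakly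
in `L²` to some `g`, hence their Poisson integrals converge pointwise. Thus `|f / ϑ|` is at most
the exponential of the Poisson integral of `g`, the zeros of `ϑ` are removable, and the quotient
lies in `𝒩⁺`.
-/

section Circle

theorem bpt_eq_circleMap (θ : ℝ) : bpt θ = circleMap 0 1 θ := by simp [bpt, circleMap]

theorem continuous_bpt : Continuous bpt := by
  unfold bpt; fun_prop

@[simp]
theorem norm_bpt (θ : ℝ) : ‖bpt θ‖ = 1 := norm_exp_ofReal_mul_I θ

theorem periodic_bpt : Function.Periodic bpt (2 * Real.pi) := fun θ => by
  simpa only [bpt_eq_circleMap] using periodic_circleMap 0 1 θ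

theorem bpt_arg_of_norm_eq_one {z : ℂ} (hz : ‖z‖ = 1) : bpt (arg z) = z := by
  simpa [bpt, hz] using norm_mul_exp_arg_mul_I z

theorem toIocMod_arg_bpt {θ : ℝ} (hθ : θ ∈ Ioc 0 (2 * Real.pi)) :
    toIocMod Real.two_pi_pos 0 (arg (bpt θ)) = θ := by
  rw [bpt, arg_exp_mul_I, toIocMod_toIocMod, toIocMod_eq_self, zero_add]
  exact hθ

theorem mem_uDisc_iff {z : ℂ} : z ∈ uDisc ↔ ‖z‖ < 1 := by simp [uDisc]

theorem ofReal_mul_bpt_mem_uDisc {r : ℝ} (h0 : 0 ≤ r) (h1 : r < 1) (θ : ℝ) :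
    (r : ℂ) * bpt θ ∈ uDisc := by
  simp [mem_uDisc_iff, abs_of_nonneg h0, h1]

theorem bpt_sub_ne_zero {z : ℂ} (hz : z ∈ uDisc) (θ : ℝ) : bpt θ - z ≠ 0 := by
  intro h
  rw [← sub_eq_zero.1 h, mem_uDisc_iff, norm_bpt] at hz
  exact lt_irrefl _ hz

variable {E : Type*} [NormedAddCommGroup E]

theorem integral_arcM [NormedSpace ℝ E] (f : ℝ → E) :
    ∫ θ, f θ ∂arcM = (2 * Real.pi)⁻¹ • ∫ θ in (0)..(2 * Real.pi), f θ := by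
  rw [arcM, integral_smul_measure, intervalIntegral.integral_of_le Real.two_pi_pos.le,
    ENNReal.toReal_inv, ENNReal.toReal_ofReal Real.two_pi_pos.le]

theorem circleAverage_eq_integral_arcM [NormedSpace ℝ E] (f : ℂ → E) :
    Real.circleAverage f 0 1 = ∫ θ, f (bpt θ) ∂arcM := by
  simp only [integral_arcM, Real.circleAverage_def, bpt_eq_circleMap]

instance isProbabilityMeasure_arcM : IsProbabilityMeasure arcM := by
  constructor
  simp only [arcM, Measure.smul_apply, Measure.restrict_apply MeasurableSet.univ, univ_inter,
    Real.volume_Ioc, sub_zero, smul_eq_mul]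
  exact ENNReal.inv_mul_cancel (by simpa using Real.pi_pos) ENNReal.ofReal_ne_top

theorem ae_arcM_mem_Ioc : ∀ᵐ θ ∂arcM, θ ∈ Ioc 0 (2 * Real.pi) :=
  Measure.ae_smul_measure (ae_restrict_mem measurableSet_Ioc) _

theorem integrable_arcM_iff {f : ℝ → E} :
    Integrable f arcM ↔ IntegrableOn f (Ioc 0 (2 * Real.pi)) :=
  integrable_smul_measure (ENNReal.inv_ne_zero.2 ENNReal.ofReal_ne_top)
    (ENNReal.inv_ne_top.2 (by simpa using Real.pi_pos))

theorem memLp_arcM_of_continuous {f : ℝ → E} (hf : Continuous f) (p : ENNReal) :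
    MemLp f p arcM := by
  obtain ⟨C, hC⟩ := (isCompact_Icc (a := 0) (b := 2 * Real.pi)).exists_bound_of_continuousOn
    hf.continuousOn
  refine MemLp.of_bound hf.aestronglyMeasurable C ?_
  filter_upwards [ae_arcM_mem_Ioc] with θ hθ using hC θ (Ioc_subset_Icc_self hθ)

theorem integrable_arcM_of_continuous {f : ℝ → E} (hf : Continuous f) : Integrable f arcM :=
  memLp_one_iff_integrable.1 (memLp_arcM_of_continuous hf 1)

end Circle

section PoissonKernel

variable {z : ℂ}

theorem continuous_herglotzRieszKernel_bpt (hz : z ∈ uDisc) :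
    Continuous fun θ => herglotzRieszKernel 0 z (bpt θ) :=
  (continuousOn_herglotzRieszKernel_sphere hz).comp_continuous continuous_bpt (by simp)

theorem poissonKernel_bpt_eq_re (z : ℂ) (θ : ℝ) :
    poissonKernel 0 z (bpt θ) = (herglotzRieszKernel 0 z (bpt θ)).re :=
  congrFun poissonKernel_eq_re_herglotzRieszKernel (bpt θ)

theorem continuous_poissonKernel_bpt (hz : z ∈ uDisc) :
    Continuous fun θ => poissonKernel 0 z (bpt θ) := by
  simp only [poissonKernel_bpt_eq_re]
  exact continuous_re.comp (continuous_herglotzRieszKernel_bpt hz)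

theorem poissonKernel_bpt (z : ℂ) (θ : ℝ) :
    poissonKernel 0 z (bpt θ) = (1 - ‖z‖ ^ 2) / ‖bpt θ - z‖ ^ 2 := by
  simp [poissonKernel_def]

theorem poissonKernel_bpt_nonneg (hz : z ∈ uDisc) (θ : ℝ) : 0 ≤ poissonKernel 0 z (bpt θ) := by
  rw [poissonKernel_bpt]
  have : ‖z‖ ^ 2 ≤ 1 := pow_le_one₀ (norm_nonneg _) (mem_uDisc_iff.1 hz).le
  exact div_nonneg (sub_nonneg.2 this) (sq_nonneg _)

theorem poissonKernel_bpt_le (hz : z ∈ uDisc) (θ : ℝ) :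
    poissonKernel 0 z (bpt θ) ≤ (1 + ‖z‖) / (1 - ‖z‖) := by
  rw [poissonKernel_bpt_eq_re]
  simpa [herglotzRieszKernel_def] using re_herglotzRieszKernel_le (by simp) hz

theorem norm_herglotzRieszKernel_bpt_le (hz : z ∈ uDisc) (θ : ℝ) :
    ‖herglotzRieszKernel 0 z (bpt θ)‖ ≤ (1 + ‖z‖) / (1 - ‖z‖) := by
  have hnum : ‖bpt θ + z‖ ≤ 1 + ‖z‖ := by simpa using norm_add_le (bpt θ) z
  have hden : 1 - ‖z‖ ≤ ‖bpt θ - z‖ := by simpa using norm_sub_norm_le (bpt θ) z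
  have hpos : 0 < 1 - ‖z‖ := sub_pos.2 (mem_uDisc_iff.1 hz)
  rw [herglotzRieszKernel_def, sub_zero, sub_zero, norm_div]
  gcongr

theorem norm_bpt_sub_ofReal_mul_bpt_comm (r θ φ : ℝ) :
    ‖bpt φ - r * bpt θ‖ = ‖bpt θ - r * bpt φ‖ := by
  have hsq : ∀ a b : ℝ, ‖bpt a - r * bpt b‖ ^ 2 = 1 + r ^ 2 - 2 * r * Real.cos (a - b) := by
    intro a b
    rw [← normSq_eq_norm_sq, normSq_apply]
    simp only [bpt, sub_re, sub_im, exp_ofReal_mul_I_re, exp_ofReal_mul_I_im, re_ofReal_mul,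
      im_ofReal_mul, Real.cos_sub]
    linear_combination Real.sin_sq_add_cos_sq a + r ^ 2 * Real.sin_sq_add_cos_sq b
  rw [← pow_left_inj₀ (norm_nonneg _) (norm_nonneg _) two_ne_zero, hsq, hsq,
    ← Real.cos_neg, neg_sub]

theorem poissonKernel_ofReal_mul_bpt_comm (r θ φ : ℝ) :
    poissonKernel 0 (r * bpt θ) (bpt φ) = poissonKernel 0 (r * bpt φ) (bpt θ) := by
  simp only [poissonKernel_bpt, norm_mul, norm_bpt, norm_bpt_sub_ofReal_mul_bpt_comm r θ φ]

theorem integral_poissonKernel_mul {f : ℂ → ℂ} (hf : DiffContOnCl ℂ f (ball 0 1))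
    (hz : z ∈ uDisc) : ∫ θ, (poissonKernel 0 z (bpt θ) : ℂ) * f (bpt θ) ∂arcM = f z := by
  have h := hf.circleAverage_poissonKernel_smul hz
  rw [circleAverage_eq_integral_arcM] at h
  simpa only [Pi.smul_apply', real_smul] using h

theorem integral_poissonKernel (hz : z ∈ uDisc) : ∫ θ, poissonKernel 0 z (bpt θ) ∂arcM = 1 := by
  have h := integral_poissonKernel_mul (f := fun _ => 1) diffContOnCl_const hz
  simp only [mul_one, integral_complex_ofReal] at h
  exact_mod_cast h

end PoissonKernel

section PoissonIntegral

/-- The Poisson integral of a function `g` on the circle, the latter parametrized by the angle. -/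
def poissonIntegral (g : ℝ → ℝ) (z : ℂ) : ℝ := ∫ θ, poissonKernel 0 z (bpt θ) * g θ ∂arcM

/-- The Herglotz integral of a function `g` on the circle: the analytic function whose real part
is the Poisson integral of `g`. -/
def herglotzIntegral (g : ℝ → ℝ) (z : ℂ) : ℂ :=
  ∫ θ, ((bpt θ + z) / (bpt θ - z)) * (g θ : ℂ) ∂arcM

variable {z : ℂ} {g k : ℝ → ℝ}

theorem integrable_poissonKernel_mul (hz : z ∈ uDisc) (hg : Integrable g arcM) :
    Integrable (fun θ => poissonKernel 0 z (bpt θ) * g θ) arcM := by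
  refine hg.bdd_mul (c := (1 + ‖z‖) / (1 - ‖z‖))
    (continuous_poissonKernel_bpt hz).aestronglyMeasurable (.of_forall fun θ => ?_)
  rw [Real.norm_of_nonneg (poissonKernel_bpt_nonneg hz θ)]
  exact poissonKernel_bpt_le hz θ

theorem poissonIntegral_const (c : ℝ) (hz : z ∈ uDisc) : poissonIntegral (fun _ => c) z = c := by
  rw [poissonIntegral, integral_mul_const, integral_poissonKernel hz, one_mul]

theorem poissonIntegral_add (hg : Integrable g arcM) (hk : Integrable k arcM) (hz : z ∈ uDisc) :
    poissonIntegral (fun θ => g θ + k θ) z = poissonIntegral g z + poissonIntegral k z := by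
  simp only [poissonIntegral, mul_add]
  exact integral_add (integrable_poissonKernel_mul hz hg) (integrable_poissonKernel_mul hz hk)

theorem poissonIntegral_mono (hg : Integrable g arcM) (hk : Integrable k arcM)
    (hgk : ∀ᵐ θ ∂arcM, g θ ≤ k θ) (hz : z ∈ uDisc) : poissonIntegral g z ≤ poissonIntegral k z := by
  refine integral_mono_ae (integrable_poissonKernel_mul hz hg)
    (integrable_poissonKernel_mul hz hk) ?_
  filter_upwards [hgk] with θ hθ
  exact mul_le_mul_of_nonneg_left hθ (poissonKernel_bpt_nonneg hz θ)

theorem poissonIntegral_nonneg (hg : ∀ θ, 0 ≤ g θ) (hz : z ∈ uDisc) : 0 ≤ poissonIntegral g z :=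
  integral_nonneg fun θ => mul_nonneg (poissonKernel_bpt_nonneg hz θ) (hg θ)

theorem poissonIntegral_le_mul_integral (hg : Integrable g arcM) (hg0 : ∀ θ, 0 ≤ g θ)
    (hz : z ∈ uDisc) :
    poissonIntegral g z ≤ (1 + ‖z‖) / (1 - ‖z‖) * ∫ θ, g θ ∂arcM := by
  rw [← integral_const_mul]
  exact integral_mono (integrable_poissonKernel_mul hz hg) (hg.const_mul _)
    fun θ => mul_le_mul_of_nonneg_right (poissonKernel_bpt_le hz θ) (hg0 θ)

theorem integrable_herglotzKernel_mul (hz : z ∈ uDisc) (hg : Integrable g arcM) :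
    Integrable (fun θ => ((bpt θ + z) / (bpt θ - z)) * (g θ : ℂ)) arcM := by
  simpa [herglotzRieszKernel_def] using
    hg.ofReal.bdd_mul (continuous_herglotzRieszKernel_bpt hz).aestronglyMeasurable
      (.of_forall (norm_herglotzRieszKernel_bpt_le hz))

theorem herglotzIntegral_add (hg : Integrable g arcM) (hk : Integrable k arcM) (hz : z ∈ uDisc) :
    herglotzIntegral (fun θ => g θ + k θ) z = herglotzIntegral g z + herglotzIntegral k z := by
  simp only [herglotzIntegral, ofReal_add, mul_add]
  exact integral_add (integrable_herglotzKernel_mul hz hg) (integrable_herglotzKernel_mul hz hk)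

theorem re_herglotzIntegral (hg : Integrable g arcM) (hz : z ∈ uDisc) :
    (herglotzIntegral g z).re = poissonIntegral g z := by
  have h := integral_re (𝕜 := ℂ) (integrable_herglotzKernel_mul hz hg)
  simp only [RCLike.re_to_complex, re_mul_ofReal] at h
  simp only [herglotzIntegral, poissonIntegral, ← h, poissonKernel_bpt_eq_re,
    herglotzRieszKernel_def, sub_zero]

theorem analyticOnDisc_herglotzIntegral (hg : Integrable g arcM) :
    AnalyticOnDisc (herglotzIntegral g) := by
  set G : ℂ → ℂ := fun ζ => g (toIocMod Real.two_pi_pos 0 (arg ζ))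
  have hG : ∀ᵐ θ ∂arcM, G (bpt θ) = g θ := by
    filter_upwards [ae_arcM_mem_Ioc] with θ hθ
    simp only [G, toIocMod_arg_bpt hθ]
  have hGint : CircleIntegrable G 0 1 := by
    rw [CircleIntegrable, intervalIntegrable_iff_integrableOn_Ioc_of_le Real.two_pi_pos.le,
      ← integrable_arcM_iff]
    simp only [← bpt_eq_circleMap]
    exact hg.ofReal.congr (hG.mono fun θ hθ => hθ.symm)
  refine (differentiableOn_circleAverage_herglotzRieszKernel_smul hGint).congr fun z _ => ?_
  rw [circleAverage_eq_integral_arcM]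
  refine integral_congr_ae (hG.mono fun θ hθ => ?_)
  simp only [hθ, herglotzRieszKernel_def, sub_zero, smul_eq_mul]

theorem continuousOn_poissonIntegral (hg : Integrable g arcM) :
    ContinuousOn (poissonIntegral g) uDisc :=
  (continuous_re.comp_continuousOn (analyticOnDisc_herglotzIntegral hg).continuousOn).congr
    fun _ hz => (re_herglotzIntegral hg hz).symm

end PoissonIntegral

section PoissonMean

theorem continuous_comp_ofReal_mul_bpt {E : Type*} [TopologicalSpace E] {F : ℂ → E}
    (hF : ContinuousOn F uDisc) {r : ℝ} (h0 : 0 ≤ r) (h1 : r < 1) :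
    Continuous fun θ : ℝ => F (r * bpt θ) :=
  hF.comp_continuous (continuous_const.mul continuous_bpt) (ofReal_mul_bpt_mem_uDisc h0 h1)

theorem continuous_uncurry_poissonKernel {r : ℝ} (h0 : 0 ≤ r) (h1 : r < 1) :
    Continuous fun q : ℝ × ℝ => poissonKernel 0 (r * bpt q.1) (bpt q.2) := by
  have hfst : Continuous fun q : ℝ × ℝ => bpt q.1 := continuous_bpt.comp continuous_fst
  have hsnd : Continuous fun q : ℝ × ℝ => bpt q.2 := continuous_bpt.comp continuous_snd
  simp only [poissonKernel_bpt]
  refine .div (by fun_prop) (by fun_prop) fun q => ?_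
  exact pow_ne_zero 2 (norm_ne_zero_iff.2 (bpt_sub_ne_zero (ofReal_mul_bpt_mem_uDisc h0 h1 _) _))

theorem integral_poissonIntegral_ofReal_mul_bpt {g : ℝ → ℝ} (hg : Integrable g arcM) {r : ℝ}
    (h0 : 0 ≤ r) (h1 : r < 1) :
    ∫ θ, poissonIntegral g (r * bpt θ) ∂arcM = ∫ φ, g φ ∂arcM := by
  have hint : Integrable
      (Function.uncurry fun θ φ => poissonKernel 0 (r * bpt θ) (bpt φ) * g φ)
      (arcM.prod arcM) := by
    refine (hg.comp_snd arcM).bdd_mul (c := (1 + r) / (1 - r))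
      (continuous_uncurry_poissonKernel h0 h1).aestronglyMeasurable (.of_forall fun q => ?_)
    have hq := ofReal_mul_bpt_mem_uDisc h0 h1 q.1
    rw [Real.norm_of_nonneg (poissonKernel_bpt_nonneg hq _)]
    simpa [abs_of_nonneg h0] using poissonKernel_bpt_le hq q.2
  simp only [poissonIntegral]
  rw [integral_integral_swap hint]
  refine integral_congr_ae (.of_forall fun φ => ?_)
  simp only [integral_mul_const, poissonKernel_ofReal_mul_bpt_comm r _ φ,
    integral_poissonKernel (ofReal_mul_bpt_mem_uDisc h0 h1 φ), one_mul]

theorem poissonIntegral_re {f : ℂ → ℂ} (hf : DiffContOnCl ℂ f (ball 0 1)) {z : ℂ}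
    (hz : z ∈ uDisc) : poissonIntegral (fun θ => (f (bpt θ)).re) z = (f z).re := by
  have hcont : Continuous fun θ => f (bpt θ) :=
    hf.continuousOn_ball.comp_continuous continuous_bpt (by simp)
  have hint : Integrable (fun θ => (poissonKernel 0 z (bpt θ) : ℂ) * f (bpt θ)) arcM :=
    integrable_arcM_of_continuous
      ((continuous_ofReal.comp (continuous_poissonKernel_bpt hz)).mul hcont)
  rw [← integral_poissonKernel_mul hf hz, poissonIntegral]
  simpa only [RCLike.re_to_complex, re_ofReal_mul] using integral_re hint

end PoissonMean

section Subharmonicity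

instance fact_two_pi_pos : Fact (0 < 2 * Real.pi) := ⟨Real.two_pi_pos⟩

theorem fourier_coe_eq_bpt_zpow (n : ℤ) (θ : ℝ) :
    fourier (T := 2 * Real.pi) n (θ : AddCircle (2 * Real.pi)) = bpt θ ^ n := by
  have hpi : (Real.pi : ℂ) ≠ 0 := ofReal_ne_zero.2 Real.pi_ne_zero
  rw [fourier_coe_apply, bpt, ← exp_int_mul]
  congr 1
  push_cast
  field_simp

theorem inv_bpt (θ : ℝ) : (bpt θ)⁻¹ = (starRingEnd ℂ) (bpt θ) := by
  simp [inv_def, normSq_eq_norm_sq]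

theorem exists_polynomial_of_mem_span_fourier {t : C(AddCircle (2 * Real.pi), ℂ)}
    (ht : t ∈ Submodule.span ℂ (Set.range (fourier (T := 2 * Real.pi)))) :
    ∃ q₁ q₂ : ℂ[X], ∀ θ : ℝ, t (θ : AddCircle (2 * Real.pi)) =
      q₁.eval (bpt θ) + (starRingEnd ℂ) (q₂.eval (bpt θ)) := by
  induction ht using Submodule.span_induction with
  | mem t ht =>
    obtain ⟨n, rfl⟩ := ht
    obtain ⟨k, rfl | rfl⟩ := n.eq_nat_or_neg
    · exact ⟨X ^ k, 0, fun θ => by rw [fourier_coe_eq_bpt_zpow]; simp⟩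
    · refine ⟨0, X ^ k, fun θ => ?_⟩
      rw [fourier_coe_eq_bpt_zpow, zpow_neg, zpow_natCast, ← inv_pow, inv_bpt]
      simp
  | zero => exact ⟨0, 0, fun θ => by simp⟩
  | add t s _ _ ht hs =>
    obtain ⟨a, b, hab⟩ := ht
    obtain ⟨c, d, hcd⟩ := hs
    refine ⟨a + c, b + d, fun θ => ?_⟩
    simp only [ContinuousMap.add_apply, hab, hcd, eval_add, map_add]
    ring
  | smul c t _ ht =>
    obtain ⟨a, b, hab⟩ := ht
    refine ⟨C c * a, C ((starRingEnd ℂ) c) * b, fun θ => ?_⟩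
    simp only [ContinuousMap.smul_apply, hab, smul_eq_mul, eval_mul, eval_C, map_mul, conj_conj]
    ring

theorem exists_polynomial_abs_sub_re_le {ψ : ℝ → ℝ} (hc : Continuous ψ)
    (hp : Function.Periodic ψ (2 * Real.pi)) {ε : ℝ} (hε : 0 < ε) :
    ∃ q : ℂ[X], ∀ θ, |ψ θ - (q.eval (bpt θ)).re| ≤ ε := by
  have hper : Function.Periodic (fun θ => (ψ θ : ℂ)) (2 * Real.pi) := fun θ => by simp [hp θ]
  let F : C(AddCircle (2 * Real.pi), ℂ) :=
    ⟨hper.lift, continuous_coinduced_dom.mpr (continuous_ofReal.comp hc)⟩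
  have hF : F ∈ closure (Submodule.span ℂ (Set.range (fourier (T := 2 * Real.pi))) : Set _) := by
    rw [← Submodule.topologicalClosure_coe, span_fourier_closure_eq_top]
    trivial
  obtain ⟨t, ht, hFt⟩ := Metric.mem_closure_iff.1 hF ε hε
  obtain ⟨q₁, q₂, hq⟩ := exists_polynomial_of_mem_span_fourier ht
  refine ⟨q₁ + q₂, fun θ => ?_⟩
  have hdist : ‖(ψ θ : ℂ) - t θ‖ ≤ ε := by
    rw [← dist_eq_norm]
    exact (ContinuousMap.dist_apply_le_dist (θ : AddCircle (2 * Real.pi))).trans hFt.le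
  simpa [hq] using (abs_re_le_norm _).trans hdist

theorem le_exp_of_forall_pos_le_exp_add {a b : ℝ} (h : ∀ ε > 0, a ≤ Real.exp (b + ε)) :
    a ≤ Real.exp b := by
  rcases le_or_gt a 0 with ha | ha
  · exact ha.trans (Real.exp_pos b).le
  · simp only [← Real.log_le_iff_le_exp ha] at h ⊢
    exact le_of_forall_pos_le_add h

variable {h q : ℂ → ℂ} {w : ℂ}

theorem norm_le_exp_re_of_forall_bpt (hh : DiffContOnCl ℂ h (ball 0 1))
    (hq : DiffContOnCl ℂ q (ball 0 1)) (hb : ∀ θ, ‖h (bpt θ)‖ ≤ Real.exp (q (bpt θ)).re)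
    (hw : w ∈ uDisc) : ‖h w‖ ≤ Real.exp (q w).re := by
  have hdiff : DiffContOnCl ℂ (fun z => h z * exp (-q z)) (ball 0 1) :=
    ⟨hh.1.mul hq.1.neg.cexp, hh.2.mul hq.2.neg.cexp⟩
  have hnorm : ∀ z, ‖h z * exp (-q z)‖ = ‖h z‖ / Real.exp (q z).re := fun z => by
    rw [norm_mul, norm_exp, neg_re, Real.exp_neg, div_eq_mul_inv]
  rw [← div_le_one (Real.exp_pos _), ← hnorm]
  refine norm_le_of_forall_mem_frontier_norm_le isBounded_ball hdiff (fun z hz => ?_)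
    (subset_closure hw)
  rw [frontier_ball _ one_ne_zero, mem_sphere_zero_iff_norm] at hz
  rw [hnorm, ← bpt_arg_of_norm_eq_one hz, div_le_one (Real.exp_pos _)]
  exact hb _

theorem norm_le_exp_poissonIntegral (hh : DiffContOnCl ℂ h (ball 0 1)) {ψ : ℝ → ℝ}
    (hc : Continuous ψ) (hp : Function.Periodic ψ (2 * Real.pi))
    (hb : ∀ θ, ‖h (bpt θ)‖ ≤ Real.exp (ψ θ)) (hw : w ∈ uDisc) :
    ‖h w‖ ≤ Real.exp (poissonIntegral ψ w) := by
  have hψ := integrable_arcM_of_continuous hc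
  have hε : ∀ ε > 0, ‖h w‖ ≤ Real.exp (poissonIntegral ψ w + ε) := by
    intro ε hε
    obtain ⟨q, hq⟩ := exists_polynomial_abs_sub_re_le hc hp (half_pos hε)
    have hqd : DiffContOnCl ℂ (fun z => q.eval z + (ε / 2 : ℝ)) (ball 0 1) :=
      (q.differentiable.add_const _).diffContOnCl
    have hqle : ∀ θ, (q.eval (bpt θ) + (ε / 2 : ℝ)).re ≤ ψ θ + ε := fun θ => by
      rw [add_re, ofReal_re]
      linarith [(abs_le.1 (hq θ)).1]
    calc ‖h w‖ ≤ Real.exp (q.eval w + (ε / 2 : ℝ)).re := by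
          refine norm_le_exp_re_of_forall_bpt hh hqd (fun θ => (hb θ).trans ?_) hw
          rw [Real.exp_le_exp, add_re, ofReal_re]
          linarith [(abs_le.1 (hq θ)).2]
      _ ≤ Real.exp (poissonIntegral ψ w + ε) := by
          have hadd := poissonIntegral_add hψ (integrable_const ε) hw
          rw [poissonIntegral_const ε hw] at hadd
          rw [Real.exp_le_exp, ← poissonIntegral_re hqd hw, ← hadd]
          refine poissonIntegral_mono (integrable_arcM_of_continuous ?_)
            (hψ.add (integrable_const ε)) (.of_forall hqle) hw
          exact continuous_re.comp ((q.continuous.comp continuous_bpt).add_const _)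
  exact le_exp_of_forall_pos_le_exp_add hε

end Subharmonicity

section Smirnov

variable {u v h k : ℂ → ℂ}

theorem MemHinf.mul (hu : MemHinf u) (hv : MemHinf v) : MemHinf fun z => u z * v z := by
  obtain ⟨hu_an, C, hC⟩ := hu
  obtain ⟨hv_an, D, hD⟩ := hv
  refine ⟨hu_an.mul hv_an, C * D, fun z hz => ?_⟩
  rw [norm_mul]
  exact mul_le_mul (hC z hz) (hD z hz) (norm_nonneg _) ((norm_nonneg _).trans (hC z hz))

theorem MemHinf.add (hu : MemHinf u) (hv : MemHinf v) : MemHinf fun z => u z + v z := by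
  obtain ⟨hu_an, C, hC⟩ := hu
  obtain ⟨hv_an, D, hD⟩ := hv
  exact ⟨hu_an.add hv_an, C + D, fun z hz => norm_add_le_of_le (hC z hz) (hD z hz)⟩

theorem memHinf_const (c : ℂ) : MemHinf fun _ => c :=
  ⟨differentiableOn_const c, ‖c‖, fun _ _ => le_rfl⟩

theorem isOuter_iff {F : ℂ → ℂ} :
    IsOuter F ↔ ∃ (c : ℂ) (g : ℝ → ℝ), ‖c‖ = 1 ∧ Integrable g arcM ∧
      ∀ z ∈ uDisc, F z = c * exp (herglotzIntegral g z) := by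
  constructor
  · rintro ⟨c, w, hc, -, hw, hF⟩
    exact ⟨c, fun θ => Real.log (w θ), hc, hw, hF⟩
  · rintro ⟨c, g, hc, hg, hF⟩
    refine ⟨c, fun θ => Real.exp (g θ), hc, fun θ => (Real.exp_pos _).le, ?_⟩
    simpa only [Real.log_exp] using ⟨hg, hF⟩

theorem IsOuter.mul (hu : IsOuter u) (hv : IsOuter v) : IsOuter fun z => u z * v z := by
  obtain ⟨c, g, hc, hg, hu⟩ := isOuter_iff.1 hu
  obtain ⟨d, k, hd, hk, hv⟩ := isOuter_iff.1 hv
  refine isOuter_iff.2 ⟨c * d, fun θ => g θ + k θ, by simp [hc, hd], hg.add hk, fun z hz => ?_⟩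
  rw [herglotzIntegral_add hg hk hz, exp_add, hu z hz, hv z hz]
  ring

theorem norm_exp_herglotzIntegral {g : ℝ → ℝ} (hg : Integrable g arcM) {z : ℂ} (hz : z ∈ uDisc) :
    ‖exp (herglotzIntegral g z)‖ = Real.exp (poissonIntegral g z) := by
  rw [norm_exp, re_herglotzIntegral hg hz]

theorem IsOuter.exists_norm_eq_exp_poissonIntegral (hv : IsOuter v) :
    ∃ g : ℝ → ℝ, Integrable g arcM ∧ ∀ z ∈ uDisc, ‖v z‖ = Real.exp (poissonIntegral g z) := by
  obtain ⟨c, g, hc, hg, hv⟩ := isOuter_iff.1 hv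
  refine ⟨g, hg, fun z hz => ?_⟩
  rw [hv z hz, norm_mul, hc, one_mul, norm_exp_herglotzIntegral hg hz]

theorem MemSmirnov.add (hh : MemSmirnov h) (hk : MemSmirnov k) :
    MemSmirnov fun z => h z + k z := by
  obtain ⟨hh_an, u₁, v₁, hu₁, hv₁, ho₁, huv₁⟩ := hh
  obtain ⟨hk_an, u₂, v₂, hu₂, hv₂, ho₂, huv₂⟩ := hk
  refine ⟨DifferentiableOn.add hh_an hk_an, fun z => u₁ z * v₂ z + u₂ z * v₁ z,
    fun z => v₁ z * v₂ z, (hu₁.mul hv₂).add (hu₂.mul hv₁), hv₁.mul hv₂, ho₁.mul ho₂,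
    fun z hz => ?_⟩
  simp only [← huv₁ z hz, ← huv₂ z hz]
  ring

theorem MemSmirnov.const_mul (hh : MemSmirnov h) (c : ℂ) : MemSmirnov fun z => c * h z := by
  obtain ⟨hh_an, u, v, hu, hv, ho, huv⟩ := hh
  refine ⟨DifferentiableOn.const_mul hh_an c, fun z => c * u z, v, (memHinf_const c).mul hu, hv,
    ho, fun z hz => ?_⟩
  simp only [← huv z hz, mul_assoc]

theorem memSmirnov_of_norm_le_exp_poissonIntegral (hh : AnalyticOnDisc h) {g : ℝ → ℝ}
    (hg : Integrable g arcM) (hb : ∀ z ∈ uDisc, ‖h z‖ ≤ Real.exp (poissonIntegral g z)) :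
    MemSmirnov h := by
  set k : ℝ → ℝ := fun θ => -|g θ|
  have hk : Integrable k arcM := hg.abs.neg
  have hv : AnalyticOnDisc fun z => exp (herglotzIntegral k z) :=
    (analyticOnDisc_herglotzIntegral hk).cexp
  have hnonpos : ∀ f : ℝ → ℝ, Integrable f arcM → (∀ θ, f θ ≤ 0) →
      ∀ z ∈ uDisc, poissonIntegral f z ≤ 0 := fun f hf hf0 z hz =>
    (poissonIntegral_mono hf (integrable_const 0) (.of_forall hf0) hz).trans_eq
      (poissonIntegral_const 0 hz)
  refine ⟨hh, fun z => h z * exp (herglotzIntegral k z), fun z => exp (herglotzIntegral k z),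
    ⟨hh.mul hv, 1, fun z hz => ?_⟩, ⟨hv, 1, fun z hz => ?_⟩,
    isOuter_iff.2 ⟨1, k, norm_one, hk, fun z _ => (one_mul _).symm⟩, fun z _ => rfl⟩
  · calc ‖h z * exp (herglotzIntegral k z)‖
        ≤ Real.exp (poissonIntegral g z) * Real.exp (poissonIntegral k z) := by
          rw [norm_mul, norm_exp_herglotzIntegral hk hz]
          gcongr
          exact hb z hz
      _ = Real.exp (poissonIntegral (fun θ => g θ + k θ) z) := by
          rw [poissonIntegral_add hg hk hz, Real.exp_add]
      _ ≤ 1 := Real.exp_le_one_iff.2 <| hnonpos _ (hg.add hk)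
          (fun θ => by simp [k, le_abs_self]) z hz
  · rw [norm_exp_herglotzIntegral hk hz, Real.exp_le_one_iff]
    exact hnonpos k hk (fun θ => by simp [k]) z hz

theorem memSmirnov_zero : MemSmirnov fun _ => 0 :=
  memSmirnov_of_norm_le_exp_poissonIntegral (differentiableOn_const 0)
    (integrable_zero _ _ _) (by simp [poissonIntegral])

/- Splitting `log |v| = k + (log |v| - k)` with `k` bounded and the remainder small in `L¹` isolates
the unbounded part of `1 / |v|` in a factor with small exponent. -/
theorem MemSmirnov.exists_norm_le_mul_exp_poissonIntegral (hh : MemSmirnov h) {ε : ℝ}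
    (hε : 0 < ε) :
    ∃ (M : ℝ) (β : ℝ → ℝ), 0 ≤ M ∧ Integrable β arcM ∧ (∀ θ, 0 ≤ β θ) ∧ ∫ θ, β θ ∂arcM ≤ ε ∧
      ∀ z ∈ uDisc, ‖h z‖ ≤ M * Real.exp (poissonIntegral β z) := by
  obtain ⟨-, u, v, ⟨-, C, hC⟩, -, ho, huv⟩ := hh
  obtain ⟨g, hg, hvg⟩ := ho.exists_norm_eq_exp_poissonIntegral
  obtain ⟨k, hgk, hk⟩ := hg.exists_boundedContinuous_integral_sub_le hε
  set β : ℝ → ℝ := fun θ => ‖g θ - k θ‖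
  have hβ : Integrable β arcM := (hg.sub hk).norm
  have hβ0 : ∀ θ, 0 ≤ β θ := fun θ => norm_nonneg _
  have hC0 : 0 ≤ C := (norm_nonneg (u 0)).trans (hC 0 (mem_ball_self one_pos))
  refine ⟨C * Real.exp ‖k‖, β, by positivity, hβ, hβ0, hgk, fun z hz => ?_⟩
  have hlower : -‖k‖ ≤ poissonIntegral g z + poissonIntegral β z := by
    rw [← poissonIntegral_add hg hβ hz, ← poissonIntegral_const (-‖k‖) hz]
    refine poissonIntegral_mono (integrable_const _) (hg.add hβ) (.of_forall fun θ => ?_) hz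
    have hkθ : -‖k‖ ≤ k θ := (abs_le.1 (k.norm_coe_le_norm θ)).1
    have hgkθ : -β θ ≤ g θ - k θ := neg_abs_le _
    linarith
  have hupper : ‖h z‖ * Real.exp (poissonIntegral g z) ≤ C := by
    rw [← hvg z hz, ← norm_mul, huv z hz]
    exact hC z hz
  calc ‖h z‖ = ‖h z‖ * Real.exp (poissonIntegral g z) * Real.exp (-poissonIntegral g z) := by
        rw [mul_assoc, ← Real.exp_add, add_neg_cancel, Real.exp_zero, mul_one]
    _ ≤ C * Real.exp (‖k‖ + poissonIntegral β z) := by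
        gcongr
        linarith
    _ = C * Real.exp ‖k‖ * Real.exp (poissonIntegral β z) := by rw [Real.exp_add, mul_assoc]

end Smirnov

section WeakCompactness

open scoped Topology

variable {𝕜 ι : Type*} [RCLike 𝕜] (U : Ultrafilter ι)

theorem exists_tendsto_apply_of_eventually_norm_le {E : Type*} [NormedAddCommGroup E]
    [NormedSpace 𝕜 E] {Φ : ι → E →L[𝕜] 𝕜} {K : ℝ} (hΦ : ∀ᶠ i in (U : Filter ι), ‖Φ i‖ ≤ K) :
    ∃ Ψ : E →L[𝕜] 𝕜, ‖Ψ‖ ≤ K ∧ ∀ x, Tendsto (fun i => Φ i x) U (𝓝 (Ψ x)) := by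
  let m : ι → WeakDual 𝕜 E := fun i => StrongDual.toWeakDual (Φ i)
  have hm : WeakDual.toStrongDual ⁻¹' closedBall (0 : StrongDual 𝕜 E) K ∈ U.map m := by
    rw [Ultrafilter.mem_map]
    filter_upwards [hΦ] with i hi
    simpa [m] using hi
  obtain ⟨Ψ, hΨ, hle⟩ := (WeakDual.isCompact_closedBall 0 K).ultrafilter_le_nhds' _ hm
  have hlim : Tendsto m U (𝓝 Ψ) := hle
  exact ⟨WeakDual.toStrongDual Ψ, by simpa using hΨ, fun x =>
    ((WeakDual.eval_continuous x).tendsto Ψ).comp hlim⟩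

theorem exists_tendsto_inner_of_eventually_norm_le {H : Type*} [NormedAddCommGroup H]
    [InnerProductSpace 𝕜 H] [CompleteSpace H] {x : ι → H} {K : ℝ}
    (hx : ∀ᶠ i in (U : Filter ι), ‖x i‖ ≤ K) :
    ∃ y : H, ‖y‖ ≤ K ∧ ∀ v, Tendsto (fun i => inner 𝕜 (x i) v) U (𝓝 (inner 𝕜 y v)) := by
  obtain ⟨Ψ, hΨ, hlim⟩ := exists_tendsto_apply_of_eventually_norm_le U
    (Φ := fun i => InnerProductSpace.toDual 𝕜 H (x i)) (hx.mono fun i hi => by simpa using hi)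
  refine ⟨(InnerProductSpace.toDual 𝕜 H).symm Ψ, by simpa using hΨ, fun v => ?_⟩
  simpa using hlim v

theorem poissonIntegral_eq_inner (g : Lp ℝ 2 arcM) {z : ℂ} (hz : z ∈ uDisc) :
    poissonIntegral g z =
      inner ℝ g ((memLp_arcM_of_continuous (continuous_poissonKernel_bpt hz) 2).toLp _) := by
  rw [L2.inner_def]
  refine integral_congr_ae ?_
  filter_upwards [(memLp_arcM_of_continuous (continuous_poissonKernel_bpt hz) 2).coeFn_toLp]
    with θ hθ
  simp [hθ]

theorem exists_tendsto_poissonIntegral_of_norm_le {G : ι → Lp ℝ 2 arcM} {K : ℝ}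
    (hG : ∀ᶠ i in (U : Filter ι), ‖G i‖ ≤ K) :
    ∃ g : Lp ℝ 2 arcM, ‖g‖ ≤ K ∧ ∀ z ∈ uDisc,
      Tendsto (fun i => poissonIntegral (G i) z) U (𝓝 (poissonIntegral g z)) := by
  obtain ⟨g, hg, hlim⟩ := exists_tendsto_inner_of_eventually_norm_le (𝕜 := ℝ) U hG
  refine ⟨g, hg, fun z hz => ?_⟩
  simp only [poissonIntegral_eq_inner _ hz]
  exact hlim _

end WeakCompactness

section LogMajorant

open scoped Topology

/-- `h` is dominated on the disc by the exponential of the Poisson integral of an `L²` function of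
norm at most `K`. Unlike membership in `𝒩⁺`, this quantitative condition survives limits. -/
def HasLogMajorant (K : ℝ) (h : ℂ → ℂ) : Prop :=
  ∃ g : Lp ℝ 2 arcM, ‖g‖ ≤ K ∧ ∀ z ∈ uDisc, ‖h z‖ ≤ Real.exp (poissonIntegral g z)

theorem HasLogMajorant.memSmirnov {K : ℝ} {h : ℂ → ℂ} (hK : HasLogMajorant K h)
    (hh : AnalyticOnDisc h) : MemSmirnov h := by
  obtain ⟨g, -, hg⟩ := hK
  exact memSmirnov_of_norm_le_exp_poissonIntegral hh ((Lp.memLp g).integrable one_le_two) hg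

theorem IsInner.tendsto_integral_abs_one_sub_norm {ϑ : ℂ → ℂ} (hϑ : IsInner ϑ) :
    Tendsto (fun r : ℝ => ∫ θ, |1 - ‖ϑ (r * bpt θ)‖| ∂arcM) (𝓝[<] 1) (𝓝 0) := by
  obtain ⟨⟨hϑ_an, C, hC⟩, Θ, hΘ, hΘ_norm⟩ := hϑ
  have hev : ∀ᶠ r : ℝ in 𝓝[<] 1, 0 < r ∧ r < 1 := Ioo_mem_nhdsLT one_pos
  rw [← integral_zero ℝ ℝ (μ := arcM)]
  refine tendsto_integral_filter_of_dominated_convergence (fun _ => 1 + C) ?_ ?_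
    (integrable_const _) ?_
  · filter_upwards [hev] with r ⟨h0, h1⟩
    exact (continuous_const.sub
      (continuous_comp_ofReal_mul_bpt hϑ_an.continuousOn h0.le h1).norm).abs.aestronglyMeasurable
  · filter_upwards [hev] with r ⟨h0, h1⟩
    refine .of_forall fun θ => ?_
    have hle := hC _ (ofReal_mul_bpt_mem_uDisc h0.le h1 θ)
    have hnonneg := norm_nonneg (ϑ (r * bpt θ))
    rw [Real.norm_eq_abs, abs_abs, abs_le]
    constructor <;> linarith
  · filter_upwards [hΘ, hΘ_norm] with θ hlim hnorm
    simpa [hnorm] using (hlim.norm.const_sub 1).abs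

theorem IsInner.exists_ne_zero {ϑ : ℂ → ℂ} (hϑ : IsInner ϑ) : ∃ z ∈ uDisc, ϑ z ≠ 0 := by
  obtain ⟨-, Θ, hΘ, hΘ_norm⟩ := hϑ
  obtain ⟨θ, hlim, hnorm⟩ := (hΘ.and hΘ_norm).exists
  have hne : Θ θ ≠ 0 := norm_ne_zero_iff.1 (hnorm ▸ one_ne_zero)
  obtain ⟨r, hr, h0, h1⟩ := ((hlim.eventually_ne hne).and (Ioo_mem_nhdsLT one_pos)).exists
  exact ⟨r * bpt θ, ofReal_mul_bpt_mem_uDisc h0.le h1 θ, hr⟩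

theorem posLog_sq_le_mul_rpow {p x : ℝ} (hp : 0 < p) (hx : 0 ≤ x) :
    Real.posLog x ^ 2 ≤ (2 / p) ^ 2 * x ^ p := by
  have hlog : Real.posLog x ≤ x ^ (p / 2) / (p / 2) :=
    max_le (by positivity) (Real.log_le_rpow_div hx (half_pos hp))
  have hsq : (x ^ (p / 2)) ^ 2 = x ^ p := by
    rw [← Real.rpow_natCast, ← Real.rpow_mul hx]
    norm_num
  calc Real.posLog x ^ 2 ≤ (x ^ (p / 2) / (p / 2)) ^ 2 := by
        have := Real.posLog_nonneg (x := x)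
        gcongr
    _ = (2 / p) ^ 2 * x ^ p := by rw [div_pow, hsq]; ring

theorem le_exp_posLog_add {a t M β : ℝ} (ha : 0 ≤ a) (hβ : 0 ≤ β) (hM : 0 ≤ M)
    (haM : a ≤ M * Real.exp β) :
    a ≤ Real.exp (Real.posLog (t * a) + β + M * |1 - t|) := by
  set E := Real.exp (Real.posLog (t * a) + β)
  have hta : t * a ≤ E := by
    refine (Real.le_exp_log _).trans (Real.exp_le_exp.2 ?_)
    have hlog : Real.log (t * a) ≤ Real.posLog (t * a) := le_max_right _ _
    linarith
  have hβE : Real.exp β ≤ E := Real.exp_le_exp.2 (by linarith [Real.posLog_nonneg (x := t * a)])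
  calc a = t * a + (1 - t) * a := by ring
    _ ≤ t * a + |1 - t| * (M * Real.exp β) := by
        gcongr
        exact le_abs_self _
    _ ≤ E + |1 - t| * (M * E) := by gcongr
    _ = E * (M * |1 - t| + 1) := by ring
    _ ≤ E * Real.exp (M * |1 - t|) := by
        gcongr
        exact Real.add_one_le_exp _
    _ = Real.exp (Real.posLog (t * a) + β + M * |1 - t|) := (Real.exp_add _ _).symm

theorem continuous_posLog_norm_comp {f : ℂ → ℂ} (hf : AnalyticOnDisc f) {r : ℝ} (h0 : 0 ≤ r)
    (h1 : r < 1) : Continuous fun θ : ℝ => Real.posLog ‖f (r * bpt θ)‖ :=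
  Real.continuous_posLog.comp (continuous_comp_ofReal_mul_bpt hf.continuousOn h0 h1).norm

theorem norm_toLp_posLog_le {f : ℂ → ℂ} (hf : AnalyticOnDisc f) {r : ℝ} (h0 : 0 ≤ r)
    (h1 : r < 1) {p : ℝ} (hp : 0 < p) :
    ‖(memLp_arcM_of_continuous (continuous_posLog_norm_comp hf h0 h1) 2).toLp _‖ ≤
      2 / p * √(hMean p f r) := by
  have hcont := continuous_posLog_norm_comp hf h0 h1
  have hmem := memLp_arcM_of_continuous hcont 2
  have hnorm : ‖hmem.toLp _‖ ^ 2 = ∫ θ, Real.posLog ‖f (r * bpt θ)‖ ^ 2 ∂arcM := by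
    rw [← real_inner_self_eq_norm_sq, L2.inner_def]
    refine integral_congr_ae ?_
    filter_upwards [hmem.coeFn_toLp] with θ hθ
    rw [real_inner_self_eq_norm_sq, hθ, Real.norm_eq_abs, sq_abs]
  have hmean : 0 ≤ hMean p f r := integral_nonneg fun θ => by positivity
  refine le_of_sq_le_sq ?_ (by positivity)
  rw [hnorm, mul_pow, Real.sq_sqrt hmean, hMean, ← integral_const_mul]
  refine integral_mono (integrable_arcM_of_continuous (hcont.pow 2)) (.const_mul ?_ _)
    fun θ => posLog_sq_le_mul_rpow hp (norm_nonneg _)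
  exact integrable_arcM_of_continuous
    ((continuous_comp_ofReal_mul_bpt hf.continuousOn h0 h1).norm.rpow_const fun _ => .inr hp.le)

theorem diffContOnCl_comp_ofReal_mul {h : ℂ → ℂ} (hh : AnalyticOnDisc h) {r : ℝ} (h0 : 0 ≤ r)
    (h1 : r < 1) : DiffContOnCl ℂ (fun z => h (r * z)) (ball 0 1) := by
  refine (DifferentiableOn.comp (t := uDisc) hh (by fun_prop) fun z hz => ?_).diffContOnCl
  rw [closure_ball _ one_ne_zero, mem_closedBall_zero_iff] at hz
  rw [mem_uDisc_iff, norm_mul, norm_real, Real.norm_of_nonneg h0]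
  exact (mul_le_of_le_one_right h0 hz).trans_lt h1

end LogMajorant

section SmirnovMajorant

open scoped Topology

variable {h ϑ : ℂ → ℂ}

theorem MemSmirnov.exists_norm_comp_ofReal_mul_le (hh : MemSmirnov h) (hϑ : AnalyticOnDisc ϑ)
    {ε : ℝ} (hε : 0 < ε) :
    ∃ A : ℝ, ∀ r : ℝ, 0 ≤ r → r < 1 → ∀ z ∈ uDisc, ‖h (r * z)‖ ≤
      Real.exp (poissonIntegral (fun θ => Real.posLog ‖ϑ (r * bpt θ) * h (r * bpt θ)‖) z +
        (1 + ‖z‖) / (1 - ‖z‖) * (ε + A * ∫ θ, |1 - ‖ϑ (r * bpt θ)‖| ∂arcM)) := by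
  obtain ⟨M, β, hM, hβ, hβ0, hβε, hhβ⟩ := hh.exists_norm_le_mul_exp_poissonIntegral hε
  refine ⟨M, fun r h0 h1 z hz => ?_⟩
  have hmem := ofReal_mul_bpt_mem_uDisc h0 h1
  have hf : AnalyticOnDisc fun z => ϑ z * h z := DifferentiableOn.mul hϑ hh.1
  have hβc := continuous_comp_ofReal_mul_bpt (continuousOn_poissonIntegral hβ) h0 h1
  have hdc : Continuous fun θ => M * |1 - ‖ϑ (r * bpt θ)‖| := continuous_const.mul
    (continuous_const.sub (continuous_comp_ofReal_mul_bpt hϑ.continuousOn h0 h1).norm).abs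
  have hβr : ∀ θ, 0 ≤ poissonIntegral β (r * bpt θ) := fun θ =>
    poissonIntegral_nonneg hβ0 (hmem θ)
  let g : ℝ → ℝ := fun θ => Real.posLog ‖ϑ (r * bpt θ) * h (r * bpt θ)‖
  let k : ℝ → ℝ := fun θ => poissonIntegral β (r * bpt θ) + M * |1 - ‖ϑ (r * bpt θ)‖|
  have hgc : Continuous g := continuous_posLog_norm_comp hf h0 h1
  have hkc : Continuous k := hβc.add hdc
  have hbound : ∀ θ, ‖h (r * bpt θ)‖ ≤ Real.exp (g θ + k θ) := fun θ => by
    simp only [g, k, norm_mul, ← add_assoc]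
    exact le_exp_posLog_add (norm_nonneg _) (hβr θ) hM (hhβ _ (hmem θ))
  have hk : ∫ θ, k θ ∂arcM ≤ ε + M * ∫ θ, |1 - ‖ϑ (r * bpt θ)‖| ∂arcM := by
    rw [integral_add (integrable_arcM_of_continuous hβc) (integrable_arcM_of_continuous hdc),
      integral_poissonIntegral_ofReal_mul_bpt hβ h0 h1, integral_const_mul]
    gcongr
  refine (norm_le_exp_poissonIntegral (diffContOnCl_comp_ofReal_mul hh.1 h0 h1) (hgc.add hkc)
    (fun θ => by simp [g, k, periodic_bpt θ]) hbound hz).trans (Real.exp_le_exp.2 ?_)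
  have hz1 : 0 < 1 - ‖z‖ := sub_pos.2 (mem_uDisc_iff.1 hz)
  calc poissonIntegral (fun θ => g θ + k θ) z = poissonIntegral g z + poissonIntegral k z :=
        poissonIntegral_add (integrable_arcM_of_continuous hgc)
          (integrable_arcM_of_continuous hkc) hz
    _ ≤ poissonIntegral g z + (1 + ‖z‖) / (1 - ‖z‖) * ∫ θ, k θ ∂arcM := by
        gcongr
        exact poissonIntegral_le_mul_integral (integrable_arcM_of_continuous hkc)
          (fun θ => add_nonneg (hβr θ) (by positivity)) hz
    _ ≤ _ := by gcongr

theorem MemSmirnov.norm_le_exp_of_tendsto_poissonIntegral {ι : Type*} {l : Filter ι} [l.NeBot]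
    (hh : MemSmirnov h) (hϑ : IsInner ϑ) {r : ι → ℝ} (hr : ∀ i, r i ∈ Ioo (0 : ℝ) 1)
    (hr1 : Tendsto r l (𝓝 1)) {z : ℂ} (hz : z ∈ uDisc) {b : ℝ}
    (hb : Tendsto (fun i =>
      poissonIntegral (fun θ => Real.posLog ‖ϑ (r i * bpt θ) * h (r i * bpt θ)‖) z) l (𝓝 b)) :
    ‖h z‖ ≤ Real.exp b := by
  set c := (1 + ‖z‖) / (1 - ‖z‖)
  have hc : 0 < c := div_pos (by positivity) (sub_pos.2 (mem_uDisc_iff.1 hz))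
  have hdefect : Tendsto (fun i => ∫ θ, |1 - ‖ϑ (r i * bpt θ)‖| ∂arcM) l (𝓝 0) :=
    hϑ.tendsto_integral_abs_one_sub_norm.comp
      (tendsto_nhdsWithin_iff.2 ⟨hr1, .of_forall fun i => (hr i).2⟩)
  have hdilate : Tendsto (fun i => ‖h (r i * z)‖) l (𝓝 ‖h z‖) := by
    have hmul : Tendsto (fun i => (r i : ℂ) * z) l (𝓝 z) := by
      simpa using ((continuous_ofReal.tendsto 1).comp hr1).mul_const z
    exact ((hh.1.continuousOn.continuousAt (isOpen_ball.mem_nhds hz)).tendsto.comp hmul).norm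
  refine le_exp_of_forall_pos_le_exp_add fun ε hε => ?_
  obtain ⟨A, hA⟩ := hh.exists_norm_comp_ofReal_mul_le hϑ.1.1 (div_pos hε hc)
  have hlim := (hb.add (((hdefect.const_mul A).const_add (ε / c)).const_mul c)).rexp
  rw [mul_zero, add_zero, mul_div_cancel₀ _ hc.ne'] at hlim
  exact le_of_tendsto_of_tendsto hdilate hlim
    (.of_forall fun i => hA _ (hr i).1.le (hr i).2 z hz)

theorem MemSmirnov.hasLogMajorant_of_hMean_le {p B : ℝ} (hp : 0 < p) (hϑ : IsInner ϑ)
    (hh : MemSmirnov h) (hB : ∀ r ∈ Ioo (0 : ℝ) 1, hMean p (fun z => ϑ z * h z) r ≤ B) :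
    HasLogMajorant (2 / p * √B) h := by
  obtain ⟨r, -, hr, hr1⟩ := exists_seq_strictMono_tendsto' (zero_lt_one (α := ℝ))
  have hf : AnalyticOnDisc fun z => ϑ z * h z := DifferentiableOn.mul hϑ.1.1 hh.1
  have hmem := fun n => memLp_arcM_of_continuous
    (continuous_posLog_norm_comp hf (hr n).1.le (hr n).2) 2
  obtain ⟨g, hg, hlim⟩ := exists_tendsto_poissonIntegral_of_norm_le (hyperfilter ℕ)
    (G := fun n => (hmem n).toLp _) (K := 2 / p * √B) (.of_forall fun n =>
      (norm_toLp_posLog_le hf (hr n).1.le (hr n).2 hp).trans (by gcongr; exact hB _ (hr n)))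
  refine ⟨g, hg, fun z hz => hh.norm_le_exp_of_tendsto_poissonIntegral hϑ hr
    (hr1.mono_left Nat.hyperfilter_le_atTop) hz ((hlim z hz).congr fun n => ?_)⟩
  refine integral_congr_ae ?_
  filter_upwards [(hmem n).coeFn_toLp] with θ hθ
  rw [hθ]

end SmirnovMajorant

section BoundedQuotient

open scoped Topology

variable {U : Set ℂ} {f q ϑ : ℂ → ℂ}

theorem exists_differentiableOn_tendsto_of_isBoundedUnder (hU : IsOpen U)
    (hd : ∀ c ∈ U, ∀ᶠ z in 𝓝[≠] c, DifferentiableAt ℂ q z)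
    (hb : ∀ c ∈ U, IsBoundedUnder (· ≤ ·) (𝓝[≠] c) fun z => ‖q z‖) :
    ∃ h : ℂ → ℂ, DifferentiableOn ℂ h U ∧ ∀ c ∈ U, Tendsto q (𝓝[≠] c) (𝓝 (h c)) := by
  let h : ℂ → ℂ := fun c => limUnder (𝓝[≠] c) q
  have hlim : ∀ c ∈ U, Tendsto q (𝓝[≠] c) (𝓝 (h c)) := fun c hc =>
    tendsto_limUnder_of_differentiable_on_punctured_nhds_of_bounded_under (hd c hc) <|
      (isBoundedUnder_le_add (hb c hc) (isBoundedUnder_const (a := ‖q c‖))).mono_le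
        (.of_forall fun z => norm_sub_le _ _)
  have heq : ∀ c ∈ U, DifferentiableAt ℂ q c → h c = q c := fun c hc hq =>
    tendsto_nhds_unique (hlim c hc) (hq.continuousAt.tendsto.mono_left nhdsWithin_le_nhds)
  refine ⟨h, fun c hc => DifferentiableAt.differentiableWithinAt ?_, hlim⟩
  have hev : ∀ᶠ z in 𝓝[≠] c, DifferentiableAt ℂ q z ∧ h =ᶠ[𝓝 z] q := by
    have hU' : ∀ᶠ z in 𝓝[≠] c, z ∈ U := nhdsWithin_le_nhds (hU.mem_nhds hc)
    filter_upwards [eventually_eventually_nhdsWithin.2 ((hd c hc).and hU'), hd c hc,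
      self_mem_nhdsWithin] with z hz hqz hzc
    rw [isOpen_compl_singleton.nhdsWithin_eq hzc] at hz
    exact ⟨hqz, hz.mono fun w hw => heq w hw.2 hw.1⟩
  refine (analyticAt_of_differentiable_on_punctured_nhds_of_continuousAt
    (hev.mono fun z hz => hz.1.congr_of_eventuallyEq hz.2) ?_).differentiableAt
  rw [continuousAt_iff_punctured_nhds]
  exact (hlim c hc).congr' (hev.mono fun z hz => hz.2.self_of_nhds.symm)

theorem eventually_ne_zero_of_exists_ne_zero (hU : IsOpen U) (hUc : IsPreconnected U)
    (hϑ : DifferentiableOn ℂ ϑ U) (hne : ∃ z ∈ U, ϑ z ≠ 0) {c : ℂ} (hc : c ∈ U) :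
    ∀ᶠ z in 𝓝[≠] c, ϑ z ≠ 0 := by
  obtain ⟨w, hw, hϑw⟩ := hne
  have han := hϑ.analyticOnNhd hU
  refine (han c hc).eventually_eq_zero_or_eventually_ne_zero.resolve_left fun h0 => hϑw ?_
  exact han.eqOn_zero_of_preconnected_of_eventuallyEq_zero hUc hc h0 hw

theorem exists_eq_mul_of_norm_le_mul_norm (hU : IsOpen U) (hUc : IsPreconnected U)
    (hf : DifferentiableOn ℂ f U) (hϑ : DifferentiableOn ℂ ϑ U) (hne : ∃ z ∈ U, ϑ z ≠ 0)
    {P : ℂ → ℝ} (hP : ContinuousOn P U) (hfP : ∀ z ∈ U, ‖f z‖ ≤ P z * ‖ϑ z‖) :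
    ∃ h : ℂ → ℂ, DifferentiableOn ℂ h U ∧ (∀ z ∈ U, f z = ϑ z * h z) ∧ ∀ z ∈ U, ‖h z‖ ≤ P z := by
  have hev : ∀ c ∈ U, ∀ᶠ z in 𝓝[≠] c, z ∈ U ∧ ϑ z ≠ 0 := fun c hc =>
    Eventually.and (mem_nhdsWithin_of_mem_nhds (hU.mem_nhds hc))
      (eventually_ne_zero_of_exists_ne_zero hU hUc hϑ hne hc)
  have hq : ∀ c ∈ U, ∀ᶠ z in 𝓝[≠] c, ‖f z / ϑ z‖ ≤ P z := fun c hc =>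
    (hev c hc).mono fun z hz => by
      rw [norm_div, div_le_iff₀ (norm_pos_iff.2 hz.2)]
      exact hfP z hz.1
  have hPlim : ∀ c ∈ U, Tendsto P (𝓝[≠] c) (𝓝 (P c)) := fun c hc =>
    (hP.continuousAt (hU.mem_nhds hc)).tendsto.mono_left nhdsWithin_le_nhds
  obtain ⟨h, hh, hlim⟩ := exists_differentiableOn_tendsto_of_isBoundedUnder
    (q := fun z => f z / ϑ z) hU
    (fun c hc => (hev c hc).mono fun z hz => (hf.differentiableAt (hU.mem_nhds hz.1)).div
      (hϑ.differentiableAt (hU.mem_nhds hz.1)) hz.2)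
    (fun c hc => (hPlim c hc).isBoundedUnder_le.mono_le (hq c hc))
  refine ⟨h, hh, fun c hc => ?_, fun c hc =>
    le_of_tendsto_of_tendsto (hlim c hc).norm (hPlim c hc) (hq c hc)⟩
  have hcont : ∀ {k : ℂ → ℂ}, DifferentiableOn ℂ k U → Tendsto k (𝓝[≠] c) (𝓝 (k c)) :=
    fun hk => (hk.continuousOn.continuousAt (hU.mem_nhds hc)).tendsto.mono_left nhdsWithin_le_nhds
  refine tendsto_nhds_unique (hcont hf) (((hcont hϑ).mul (hlim c hc)).congr' ?_)
  filter_upwards [hev c hc] with z hz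
  exact mul_div_cancel₀ _ hz.2

theorem exists_memSmirnov_of_tendsto {ι : Type*} (𝒰 : Ultrafilter ι) {F : ι → ℂ → ℂ} {K : ℝ}
    (hϑ : IsInner ϑ) (hf : AnalyticOnDisc f)
    (hF : ∀ᶠ i in (𝒰 : Filter ι), ∃ h, HasLogMajorant K h ∧ ∀ z ∈ uDisc, F i z = ϑ z * h z)
    (hlim : ∀ z ∈ uDisc, Tendsto (F · z) 𝒰 (𝓝 (f z))) :
    ∃ h, MemSmirnov h ∧ ∀ z ∈ uDisc, f z = ϑ z * h z := by
  have hmaj : ∀ i, ∃ g : Lp ℝ 2 arcM,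
      (∃ h, HasLogMajorant K h ∧ ∀ z ∈ uDisc, F i z = ϑ z * h z) →
      ‖g‖ ≤ K ∧ ∀ z ∈ uDisc, ‖F i z‖ ≤ Real.exp (poissonIntegral g z) * ‖ϑ z‖ := by
    intro i
    by_cases hi : ∃ h, HasLogMajorant K h ∧ ∀ z ∈ uDisc, F i z = ϑ z * h z
    · obtain ⟨h, ⟨g, hg, hhg⟩, hFh⟩ := hi
      refine ⟨g, fun _ => ⟨hg, fun z hz => ?_⟩⟩
      rw [hFh z hz, norm_mul, mul_comm]
      exact mul_le_mul_of_nonneg_right (hhg z hz) (norm_nonneg _)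
    · exact ⟨0, fun h => absurd h hi⟩
  choose G hG using hmaj
  obtain ⟨g, hg, hglim⟩ := exists_tendsto_poissonIntegral_of_norm_le 𝒰
    (hF.mono fun i hi => (hG i hi).1)
  have hfg : ∀ z ∈ uDisc, ‖f z‖ ≤ Real.exp (poissonIntegral g z) * ‖ϑ z‖ := fun z hz =>
    le_of_tendsto_of_tendsto (hlim z hz).norm ((hglim z hz).rexp.mul_const _)
      (hF.mono fun i hi => (hG i hi).2 z hz)
  obtain ⟨h, hh, hfh, hhg⟩ := exists_eq_mul_of_norm_le_mul_norm isOpen_ball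
    (convex_ball (0 : ℂ) 1).isPreconnected hf hϑ.1.1 hϑ.exists_ne_zero
    (continuousOn_poissonIntegral ((Lp.memLp g).integrable one_le_two)).rexp hfg
  exact ⟨h, HasLogMajorant.memSmirnov ⟨g, hg, hhg⟩ hh, hfh⟩

end BoundedQuotient

section KreinSmulian

open scoped BoundedContinuousFunction

variable {𝕜 E : Type*} [RCLike 𝕜] [NormedAddCommGroup E] [NormedSpace 𝕜 E]

theorem norm_le_of_forall_mul_norm_le_one {Φ : StrongDual 𝕜 E} {c : ℝ} (hc : 0 ≤ c)
    (h : ∀ x, c * ‖x‖ ≤ 1 → ‖Φ x‖ ≤ 1) : ‖Φ‖ ≤ c := by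
  refine Φ.opNorm_le_bound hc fun x => ?_
  by_contra! hlt
  obtain ⟨t, hct, htΦ⟩ := exists_between hlt
  have ht : 0 < t := (by positivity : 0 ≤ c * ‖x‖).trans_lt hct
  have hnorm : ‖((t : 𝕜)⁻¹)‖ = t⁻¹ := by rw [norm_inv, RCLike.norm_of_nonneg ht.le]
  have hle : ‖Φ ((t : 𝕜)⁻¹ • x)‖ ≤ 1 := h _ <| by
    rw [norm_smul, hnorm, mul_left_comm, inv_mul_le_one₀ ht]
    exact hct.le
  rw [map_smul, norm_smul, hnorm, inv_mul_le_one₀ ht] at hle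
  exact htΦ.not_ge hle

variable {S : Submodule 𝕜 (StrongDual 𝕜 E)} {Λ : StrongDual 𝕜 E}

theorem isCompact_setOf_sub_mem_and_norm_le
    (hS : ∀ R, IsClosed (WeakDual.toStrongDual ⁻¹' (S ∩ closedBall (0 : StrongDual 𝕜 E) R)))
    (Λ : StrongDual 𝕜 E) (d : ℝ) :
    IsCompact {Ψ : WeakDual 𝕜 E | Λ - WeakDual.toStrongDual Ψ ∈ S ∧
      ‖WeakDual.toStrongDual Ψ‖ ≤ d} := by
  have hclosed : IsClosed {Ψ : WeakDual 𝕜 E | Λ - WeakDual.toStrongDual Ψ ∈ S ∧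
      ‖Λ - WeakDual.toStrongDual Ψ‖ ≤ ‖Λ‖ + d} := by
    simpa [Set.preimage, Set.inter_def] using (hS (‖Λ‖ + d)).preimage
      (continuous_const.sub continuous_id (f := fun _ => StrongDual.toWeakDual Λ))
  convert (WeakDual.isCompact_closedBall (0 : StrongDual 𝕜 E) d).inter_right hclosed using 1
  ext Ψ
  have hle : ‖WeakDual.toStrongDual Ψ‖ ≤ d → ‖Λ - WeakDual.toStrongDual Ψ‖ ≤ ‖Λ‖ + d := fun h =>
    (norm_sub_le _ _).trans (by gcongr)
  simp only [mem_ofPred_eq, mem_inter_iff, mem_preimage, mem_closedBall_zero_iff]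
  tauto

theorem exists_finset_forall_one_lt_norm_apply
    (hS : ∀ R, IsClosed (WeakDual.toStrongDual ⁻¹' (S ∩ closedBall (0 : StrongDual 𝕜 E) R)))
    {c : ℝ} (hc : 0 ≤ c) (d : ℝ) {G : Finset E}
    (hG : ∀ Φ, Λ - Φ ∈ S → ‖Φ‖ ≤ c → ∃ x ∈ G, 1 < ‖Φ x‖) :
    ∃ G' : Finset E, (∀ x ∈ G', x ∈ G ∨ c * ‖x‖ ≤ 1) ∧
      ∀ Φ, Λ - Φ ∈ S → ‖Φ‖ ≤ d → ∃ x ∈ G', 1 < ‖Φ x‖ := by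
  classical
  let A : Set E := {x | x ∈ G ∨ c * ‖x‖ ≤ 1}
  obtain ⟨F, hF⟩ := (isCompact_setOf_sub_mem_and_norm_le hS Λ d).elim_finite_subfamily_closed
    (fun x : A => {Ψ : WeakDual 𝕜 E | ‖Ψ x‖ ≤ 1})
    (fun x => isClosed_le (WeakDual.eval_continuous (x : E)).norm continuous_const) <| by
      rw [Set.eq_empty_iff_forall_notMem]
      rintro Ψ ⟨⟨hΨS, -⟩, hΨ⟩
      simp only [mem_iInter, Subtype.forall] at hΨ
      obtain ⟨x, hx, hlt⟩ := hG (WeakDual.toStrongDual Ψ) hΨS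
        (norm_le_of_forall_mul_norm_le_one hc fun x hx => hΨ x (.inr hx))
      exact hlt.not_ge (hΨ x (.inl hx))
  refine ⟨F.image Subtype.val, fun x hx => ?_, fun Φ hΦS hΦ => ?_⟩
  · obtain ⟨y, -, rfl⟩ := Finset.mem_image.1 hx
    exact y.2
  by_contra! hle
  refine Set.eq_empty_iff_forall_notMem.1 hF (StrongDual.toWeakDual Φ) ⟨⟨hΦS, hΦ⟩, ?_⟩
  simp only [mem_iInter]
  exact fun x hx => hle x (Finset.mem_image_of_mem _ hx)

-- The finiteness condition makes `D` a null sequence, so restriction to `D` maps into `c₀`; this is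
-- why a functional separating the restrictions comes from a vector of `E`.
theorem exists_finite_and_forall_one_lt_norm_apply
    (hS : ∀ R, IsClosed (WeakDual.toStrongDual ⁻¹' (S ∩ closedBall (0 : StrongDual 𝕜 E) R)))
    (hΛ : Λ ∉ S) :
    ∃ D : Set E, (∀ n : ℕ, {x ∈ D | 1 < n * ‖x‖}.Finite) ∧
      ∀ Φ, Λ - Φ ∈ S → ∃ x ∈ D, 1 < ‖Φ x‖ := by
  have hstep : ∀ (n : ℕ) (G : Finset E),
      (∀ Φ, Λ - Φ ∈ S → ‖Φ‖ ≤ n → ∃ x ∈ G, 1 < ‖Φ x‖) →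
      ∃ G' : Finset E, (∀ x ∈ G', x ∈ G ∨ n * ‖x‖ ≤ 1) ∧
        ∀ Φ, Λ - Φ ∈ S → ‖Φ‖ ≤ (n + 1 : ℕ) → ∃ x ∈ G', 1 < ‖Φ x‖ := fun n G hG =>
    exists_finset_forall_one_lt_norm_apply hS n.cast_nonneg _ hG
  choose! next hnew hnext using hstep
  obtain ⟨G, hG_succ⟩ : ∃ G : ℕ → Finset E, ∀ n, G (n + 1) = next n (G n) :=
    ⟨fun n => Nat.rec ∅ next n, fun _ => rfl⟩
  have hG : ∀ (n : ℕ) Φ, Λ - Φ ∈ S → ‖Φ‖ ≤ n → ∃ x ∈ G n, 1 < ‖Φ x‖ := by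
    intro n
    induction n with
    | zero =>
      intro Φ hΦS hΦ
      have hΦ0 : Φ = 0 := by simpa using hΦ
      exact absurd (by simpa [hΦ0] using hΦS) hΛ
    | succ n ih => exact hG_succ n ▸ hnext n _ ih
  refine ⟨⋃ n, (G n : Set E), fun n => ?_, fun Φ hΦS => ?_⟩
  · refine ((Set.finite_le_nat n).biUnion fun m _ => (G m).finite_toSet).subset ?_
    rintro x ⟨hx, hlt⟩
    obtain ⟨m, hm, hmin⟩ : ∃ m, x ∈ G m ∧ ∀ k < m, x ∉ G k := by
      classical
      have hex : ∃ m, x ∈ G m := by simpa using hx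
      exact ⟨Nat.find hex, Nat.find_spec hex, fun k hk => Nat.find_min hex hk⟩
    refine mem_biUnion (x := m) (show m ≤ n from ?_) hm
    by_contra! hnm
    obtain ⟨k, rfl⟩ := Nat.exists_eq_add_one_of_ne_zero (Nat.ne_zero_of_lt hnm)
    have hk : k * ‖x‖ ≤ 1 :=
      (hnew k _ (hG k) x (hG_succ k ▸ hm)).resolve_left (hmin k k.lt_succ_self)
    have hnk : (n : ℝ) ≤ k := by exact_mod_cast Nat.lt_succ_iff.1 hnm
    exact hlt.not_ge ((mul_le_mul_of_nonneg_right hnk (norm_nonneg x)).trans hk)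
  · obtain ⟨n, hn⟩ := exists_nat_ge ‖Φ‖
    obtain ⟨x, hx, hlt⟩ := hG n Φ hΦS hn
    exact ⟨x, mem_iUnion.2 ⟨n, hx⟩, hlt⟩

theorem exists_mem_span_norm_sub_le {ι : Type*} [Finite ι] (φ : StrongDual 𝕜 E)
    (L : ι → StrongDual 𝕜 E) {ε : ℝ} (hε : 0 ≤ ε)
    (hφ : ∀ x, (∀ i, L i x = 0) → ‖φ x‖ ≤ ε * ‖x‖) :
    ∃ t ∈ Submodule.span 𝕜 (range L), ‖φ - t‖ ≤ ε := by
  let N : Submodule 𝕜 E := ⨅ i, LinearMap.ker (L i).toLinearMap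
  have hN : ∀ x ∈ N, ∀ i, L i x = 0 := fun x hx => by simpa [N] using hx
  obtain ⟨g, hg, hnorm⟩ := exists_extension_norm_eq N (φ.comp N.subtypeL)
  refine ⟨φ - g, ?_, ?_⟩
  · have hmem := mem_span_of_iInf_ker_le_ker (L := fun i => (L i).toLinearMap)
      (K := (φ - g).toLinearMap) fun x hx => by simpa [sub_eq_zero] using (hg ⟨x, hx⟩).symm
    have hspan := Submodule.span_image (s := range L)
      (ContinuousLinearMap.coeLM 𝕜 (M := E) (N₃ := 𝕜))
    rw [← range_comp] at hspan
    obtain ⟨t, ht, heq⟩ := hspan.le hmem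
    rwa [← ContinuousLinearMap.coe_injective heq]
  · rw [sub_sub_cancel, hnorm]
    exact ContinuousLinearMap.opNorm_le_bound _ hε fun x => hφ x (hN x x.2)

theorem mem_range_inclusionInDoubleDual_of_forall_pos [CompleteSpace E]
    (φ : StrongDual 𝕜 (StrongDual 𝕜 E))
    (h : ∀ ε > 0, ∃ G : Finset E, ∀ Φ : StrongDual 𝕜 E, (∀ x ∈ G, Φ x = 0) → ‖φ Φ‖ ≤ ε * ‖Φ‖) :
    φ ∈ range (NormedSpace.inclusionInDoubleDual 𝕜 E) := by
  let J := NormedSpace.inclusionInDoubleDualLi (E := E) 𝕜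
  have hclosed : IsClosed (range J) := J.isometry.isUniformInducing.isComplete_range.isClosed
  refine hclosed.closure_subset ((mem_closure_iff_nhds_basis (nhds_basis_closedBall (x := φ))).2
    fun ε hε => ?_)
  obtain ⟨G, hG⟩ := h ε hε
  obtain ⟨t, ht, hle⟩ := exists_mem_span_norm_sub_le φ (fun x : G => J x) hε.le
    fun Φ hΦ => hG Φ fun x hx => hΦ ⟨x, hx⟩
  have hspan : Submodule.span 𝕜 (range fun x : G => J x) ≤ LinearMap.range J.toLinearMap :=
    Submodule.span_le.2 (range_subset_iff.2 fun x => ⟨x, rfl⟩)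
  exact ⟨t, hspan ht, mem_closedBall_iff_norm'.2 hle⟩

/-- Restriction of functionals to a bounded set `D`, as an operator into the bounded continuous
functions on `D` with the supremum norm. -/
def restrictBounded {D : Set E} (hD : Bornology.IsBounded D) : StrongDual 𝕜 E →L[𝕜] D →ᵇ 𝕜 :=
  let M := hD.exists_pos_norm_le.choose
  have hM : 0 < M ∧ ∀ x ∈ D, ‖x‖ ≤ M := hD.exists_pos_norm_le.choose_spec
  have hbound : ∀ (Φ : StrongDual 𝕜 E) (x : D), ‖Φ x‖ ≤ M * ‖Φ‖ := fun Φ x =>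
    (Φ.le_opNorm_of_le (hM.2 x x.2)).trans (mul_comm _ _).le
  LinearMap.mkContinuous
    { toFun Φ := .ofNormedAddCommGroup (fun x : D => Φ x)
        (Φ.continuous.comp continuous_subtype_val) (M * ‖Φ‖) (hbound Φ)
      map_add' _ _ := rfl
      map_smul' _ _ := rfl }
    M fun Φ => BoundedContinuousFunction.norm_ofNormedAddCommGroup_le _
      (mul_nonneg hM.1.le (norm_nonneg Φ)) (hbound Φ)

theorem restrictBounded_apply {D : Set E} (hD : Bornology.IsBounded D) (Φ : StrongDual 𝕜 E)
    (x : D) : restrictBounded hD Φ x = Φ x :=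
  rfl

theorem isBounded_of_finite_setOf_one_lt {D : Set E} (hD : {x ∈ D | 1 < ‖x‖}.Finite) :
    Bornology.IsBounded D :=
  (hD.isBounded.union (isBounded_closedBall (x := 0) (r := 1))).subset fun x hx =>
    (lt_or_ge 1 ‖x‖).imp (fun h => ⟨hx, h⟩) mem_closedBall_zero_iff.2

theorem exists_dual_eq_zero_and_ne_zero_of_notMem_closure {V : Submodule 𝕜 E} {y : E}
    (hy : y ∉ closure (V : Set E)) :
    ∃ ψ : StrongDual 𝕜 E, (∀ v ∈ V, ψ v = 0) ∧ ψ y ≠ 0 := by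
  have : IsClosed (V.topologicalClosure : Set E) := V.isClosed_topologicalClosure
  have hq : V.topologicalClosure.mkQL y ≠ 0 := fun h =>
    hy ((Submodule.Quotient.mk_eq_zero _).1 h)
  obtain ⟨g, hg⟩ := SeparatingDual.exists_ne_zero (R := 𝕜) hq
  refine ⟨g.comp V.topologicalClosure.mkQL, fun v hv => ?_, hg⟩
  have hv0 : V.topologicalClosure.mkQL v = 0 :=
    (Submodule.Quotient.mk_eq_zero _).2 (V.le_topologicalClosure hv)
  rw [ContinuousLinearMap.comp_apply, hv0, map_zero]

theorem exists_forall_apply_restrictBounded_eq [CompleteSpace E] {D : Set E}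
    (hD : Bornology.IsBounded D) (hfin : ∀ n : ℕ, {x ∈ D | 1 < n * ‖x‖}.Finite)
    (ψ : StrongDual 𝕜 (D →ᵇ 𝕜)) :
    ∃ x : E, ∀ Φ : StrongDual 𝕜 E, ψ (restrictBounded hD Φ) = Φ x := by
  suffices hmem : ψ.comp (restrictBounded hD) ∈ range (NormedSpace.inclusionInDoubleDual 𝕜 E) by
    obtain ⟨x, hx⟩ := hmem
    exact ⟨x, fun Φ => (DFunLike.congr_fun hx Φ).symm⟩
  refine mem_range_inclusionInDoubleDual_of_forall_pos _ fun ε hε => ?_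
  obtain ⟨n, hn⟩ := exists_nat_gt (‖ψ‖ / ε)
  have hn0 : (0 : ℝ) < n := (by positivity : 0 ≤ ‖ψ‖ / ε).trans_lt hn
  refine ⟨(hfin n).toFinset, fun Φ hΦ => ?_⟩
  have hsmall : ‖restrictBounded hD Φ‖ ≤ ‖Φ‖ / n := by
    refine (BoundedContinuousFunction.norm_le (by positivity)).2 fun x => ?_
    rw [restrictBounded_apply]
    rcases lt_or_ge 1 (n * ‖(x : E)‖) with hx | hx
    · rw [hΦ x ((hfin n).mem_toFinset.2 ⟨x.2, hx⟩), norm_zero]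
      positivity
    · rw [le_div_iff₀ hn0]
      calc ‖Φ x‖ * n ≤ ‖Φ‖ * ‖(x : E)‖ * n := by gcongr; exact Φ.le_opNorm x
        _ = ‖Φ‖ * (n * ‖(x : E)‖) := by ring
        _ ≤ ‖Φ‖ := mul_le_of_le_one_right (norm_nonneg _) hx
  calc ‖ψ (restrictBounded hD Φ)‖ ≤ ‖ψ‖ * (‖Φ‖ / n) := ψ.le_opNorm_of_le hsmall
    _ = ‖ψ‖ / n * ‖Φ‖ := by ring
    _ ≤ ε * ‖Φ‖ := by gcongr; exact (div_lt_comm₀ hε hn0).1 hn |>.le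

theorem exists_forall_apply_eq_zero_and_ne_zero_of_notMem [CompleteSpace E]
    (hS : ∀ R, IsClosed (WeakDual.toStrongDual ⁻¹' (S ∩ closedBall (0 : StrongDual 𝕜 E) R)))
    (hΛ : Λ ∉ S) : ∃ x, (∀ Φ ∈ S, Φ x = 0) ∧ Λ x ≠ 0 := by
  obtain ⟨D, hfin, hD⟩ := exists_finite_and_forall_one_lt_norm_apply hS hΛ
  have hbdd : Bornology.IsBounded D := isBounded_of_finite_setOf_one_lt (by simpa using hfin 1)
  have hfar : restrictBounded hbdd Λ ∉
      closure (S.map (restrictBounded hbdd).toLinearMap : Set (D →ᵇ 𝕜)) := by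
    rw [Metric.mem_closure_iff]
    push Not
    refine ⟨1, one_pos, ?_⟩
    rintro _ ⟨Φ, hΦ, rfl⟩
    obtain ⟨x, hx, hlt⟩ := hD (Λ - Φ) (by simpa using hΦ)
    rw [dist_eq_norm, ContinuousLinearMap.coe_coe, ← map_sub]
    exact hlt.le.trans ((restrictBounded hbdd (Λ - Φ)).norm_coe_le_norm ⟨x, hx⟩)
  obtain ⟨ψ, hψS, hψΛ⟩ := exists_dual_eq_zero_and_ne_zero_of_notMem_closure hfar
  obtain ⟨x, hx⟩ := exists_forall_apply_restrictBounded_eq hbdd hfin ψ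
  exact ⟨x, fun Φ hΦ => (hx Φ).symm.trans (hψS _ (Submodule.mem_map_of_mem hΦ)), by rwa [← hx]⟩

end KreinSmulian

theorem wstarClosure_subset_of_forall_isClosed {X : Type*} [NormedAddCommGroup X] [NormedSpace ℂ X]
    [CompleteSpace X] {S : Submodule ℂ (StrongDual ℂ X)}
    (hS : ∀ R, IsClosed (WeakDual.toStrongDual ⁻¹' (S ∩ closedBall (0 : StrongDual ℂ X) R))) :
    wstarClosure (S : Set (StrongDual ℂ X)) ⊆ S := by
  intro Λ hΛ
  by_contra hΛS
  obtain ⟨x, hxS, hxΛ⟩ := exists_forall_apply_eq_zero_and_ne_zero_of_notMem hS hΛS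
  obtain ⟨Φ, hΦ, hlt⟩ := hΛ {x} ‖Λ x‖ (norm_pos_iff.2 hxΛ)
  simpa [hxS Φ hΦ] using hlt x (Finset.mem_singleton_self x)

section CauchyDual

open scoped Topology

variable {X : Type*} [NormedAddCommGroup X] [NormedSpace ℂ X] {e : ℕ → X}

theorem hMean_le_rpow_of_hardyNorm_le {p N r : ℝ} {f : ℂ → ℂ} (hp : 0 < p) (hf : MemHp p f)
    (hN : hardyNorm p f ≤ N) (hr : r ∈ Ioo (0 : ℝ) 1) : hMean p f r ≤ N ^ (min 1 (1 / p))⁻¹ := by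
  have hmin : 0 < min 1 (1 / p) := lt_min one_pos (by positivity)
  have hle : hMean p f r ≤ sSup (hMean p f '' Ioo 0 1) := le_csSup hf.2 (mem_image_of_mem _ hr)
  have hnonneg : 0 ≤ hMean p f r := integral_nonneg fun θ => by positivity
  have hsup : 0 ≤ sSup (hMean p f '' Ioo 0 1) := hnonneg.trans hle
  exact hle.trans ((Real.le_rpow_inv_iff_of_pos hsup
    ((Real.rpow_nonneg hsup _).trans hN) hmin).2 hN)

theorem cauchyDualFn_zero_right (e : ℕ → X) (Λ : StrongDual ℂ X) :
    cauchyDualFn e Λ 0 = (starRingEnd ℂ) (Λ (e 0)) := by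
  rw [cauchyDualFn, tsum_eq_single 0 fun n hn => by simp [hn]]
  simp

theorem exists_forall_norm_apply_mul_pow_le_of_apply_ne_zero {Λ : StrongDual ℂ X} {r : ℝ}
    (hΛ : AnalyticOnDisc (cauchyDualFn e Λ)) (h0 : Λ (e 0) ≠ 0) (hr : r ∈ Ioo (0 : ℝ) 1) :
    ∃ M, ∀ n, ‖Λ (e n)‖ * r ^ n ≤ M := by
  obtain ⟨s, hrs, hs1⟩ := exists_between hr.2
  have hs0 : 0 < s := hr.1.trans hrs
  have hs : (s : ℂ) ∈ uDisc := by simpa [mem_uDisc_iff, abs_of_pos hs0] using hs1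
  have hne : ∀ᶠ z in 𝓝[≠] (s : ℂ), cauchyDualFn e Λ z ≠ 0 :=
    eventually_ne_zero_of_exists_ne_zero isOpen_ball (convex_ball 0 1).isPreconnected hΛ
      ⟨0, by simp, by simpa [cauchyDualFn_zero_right] using h0⟩ hs
  have hlt : ∀ᶠ z in 𝓝[≠] (s : ℂ), r < ‖z‖ :=
    (continuous_norm.continuousAt.eventually_const_lt
      (by simpa [abs_of_pos hs0] using hrs)).filter_mono nhdsWithin_le_nhds
  obtain ⟨z, hz, hrz⟩ := (hne.and hlt).exists
  -- A divergent `tsum` would be `0`, so a nonzero value forces convergence at `z`.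
  have hsum : Summable fun n => (starRingEnd ℂ) (Λ (e n)) * z ^ n :=
    by_contra fun h => hz (tsum_eq_zero_of_not_summable h)
  obtain ⟨M, hM⟩ := hsum.tendsto_atTop_zero.norm.bddAbove_range
  refine ⟨M, fun n => le_trans ?_ (hM (mem_range_self n))⟩
  rw [norm_mul, norm_pow, RCLike.norm_conj]
  have := hr.1.le
  gcongr

theorem exists_forall_norm_apply_mul_pow_le (he0 : e 0 ≠ 0)
    (ha : ∀ Λ : StrongDual ℂ X, AnalyticOnDisc (cauchyDualFn e Λ)) {r : ℝ}
    (hr : r ∈ Ioo (0 : ℝ) 1) (Λ : StrongDual ℂ X) : ∃ M, ∀ n, ‖Λ (e n)‖ * r ^ n ≤ M := by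
  by_cases hΛ : Λ (e 0) = 0
  · obtain ⟨Ψ, hΨ⟩ := SeparatingDual.exists_ne_zero (R := ℂ) he0
    obtain ⟨M₁, hM₁⟩ := exists_forall_norm_apply_mul_pow_le_of_apply_ne_zero (ha Ψ) hΨ hr
    obtain ⟨M₂, hM₂⟩ := exists_forall_norm_apply_mul_pow_le_of_apply_ne_zero (ha (Λ + Ψ))
      (by simpa [hΛ] using hΨ) hr
    refine ⟨M₂ + M₁, fun n => ?_⟩
    have hrn : 0 ≤ r ^ n := pow_nonneg hr.1.le n
    calc ‖Λ (e n)‖ * r ^ n ≤ (‖(Λ + Ψ) (e n)‖ + ‖Ψ (e n)‖) * r ^ n := by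
          gcongr
          simpa using norm_sub_le ((Λ + Ψ) (e n)) (Ψ (e n))
      _ ≤ M₂ + M₁ := by rw [add_mul]; exact add_le_add (hM₂ n) (hM₁ n)
  · exact exists_forall_norm_apply_mul_pow_le_of_apply_ne_zero (ha Λ) hΛ hr

theorem exists_forall_norm_mul_pow_le (he0 : e 0 ≠ 0)
    (ha : ∀ Λ : StrongDual ℂ X, AnalyticOnDisc (cauchyDualFn e Λ)) {r : ℝ}
    (hr : r ∈ Ioo (0 : ℝ) 1) : ∃ M, ∀ n, ‖e n‖ * r ^ n ≤ M := by
  have hnorm : ∀ n, ‖(r : ℂ) ^ n‖ = r ^ n := fun n => by simp [abs_of_pos hr.1]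
  obtain ⟨M, hM⟩ := banach_steinhaus
    (g := fun n => NormedSpace.inclusionInDoubleDualLi (E := X) ℂ ((r : ℂ) ^ n • e n)) fun Λ => by
      obtain ⟨M, hM⟩ := exists_forall_norm_apply_mul_pow_le he0 ha hr Λ
      refine ⟨M, fun n => le_of_eq_of_le ?_ (hM n)⟩
      change ‖Λ ((r : ℂ) ^ n • e n)‖ = _
      rw [map_smul, norm_smul, hnorm, mul_comm]
  refine ⟨M, fun n => ?_⟩
  simpa only [LinearIsometry.norm_map, norm_smul, hnorm, mul_comm] using hM n

theorem summable_pow_smul [CompleteSpace X] (he0 : e 0 ≠ 0)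
    (ha : ∀ Λ : StrongDual ℂ X, AnalyticOnDisc (cauchyDualFn e Λ)) {z : ℂ} (hz : z ∈ uDisc) :
    Summable fun n => z ^ n • e n := by
  obtain ⟨r, hzr, hr1⟩ := exists_between (mem_uDisc_iff.1 hz)
  have hr0 : 0 < r := (norm_nonneg z).trans_lt hzr
  obtain ⟨M, hM⟩ := exists_forall_norm_mul_pow_le he0 ha ⟨hr0, hr1⟩
  have hgeom : Summable fun n => M * (‖z‖ / r) ^ n :=
    (summable_geometric_of_lt_one (by positivity) ((div_lt_one hr0).2 hzr)).mul_left M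
  refine hgeom.of_norm_bounded fun n => ?_
  calc ‖z ^ n • e n‖ = ‖e n‖ * r ^ n * (‖z‖ / r) ^ n := by
        rw [norm_smul, norm_pow, div_pow]; field_simp
    _ ≤ M * (‖z‖ / r) ^ n := by gcongr; exact hM n

theorem exists_forall_cauchyDualFn_eq_conj_apply [CompleteSpace X] (he0 : e 0 ≠ 0)
    (ha : ∀ Λ : StrongDual ℂ X, AnalyticOnDisc (cauchyDualFn e Λ)) {z : ℂ} (hz : z ∈ uDisc) :
    ∃ x, ∀ Λ : StrongDual ℂ X, cauchyDualFn e Λ z = (starRingEnd ℂ) (Λ x) := by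
  have hsum : Summable fun n => (starRingEnd ℂ) z ^ n • e n :=
    summable_pow_smul he0 ha (by rwa [mem_uDisc_iff, RCLike.norm_conj, ← mem_uDisc_iff])
  refine ⟨∑' n, (starRingEnd ℂ) z ^ n • e n, fun Λ => ?_⟩
  rw [Λ.map_tsum hsum, Complex.conj_tsum, cauchyDualFn]
  exact tsum_congr fun n => by simp [mul_comm]

/-- The functionals `Λ` on `X` whose Cauchy dual function lies in `ϑ𝒩⁺`, i.e. `X' ∩ ϑ𝒩⁺` under the
identification of `X'` with the dual of `X`. The argument `heval` represents the point evaluations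
on `X'` by vectors of `X`: without it a divergent `tsum` could break additivity in `Λ`. -/
def innerMulSmirnov (e : ℕ → X) (ϑ : ℂ → ℂ)
    (heval : ∀ z ∈ uDisc, ∃ x, ∀ Λ : StrongDual ℂ X, cauchyDualFn e Λ z = (starRingEnd ℂ) (Λ x)) :
    Submodule ℂ (StrongDual ℂ X) where
  carrier := {Λ | ∃ h, MemSmirnov h ∧ ∀ z ∈ uDisc, cauchyDualFn e Λ z = ϑ z * h z}
  zero_mem' := ⟨fun _ => 0, memSmirnov_zero, fun z _ => by simp [cauchyDualFn]⟩
  add_mem' := by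
    rintro Λ₁ Λ₂ ⟨h₁, hh₁, heq₁⟩ ⟨h₂, hh₂, heq₂⟩
    refine ⟨fun z => h₁ z + h₂ z, hh₁.add hh₂, fun z hz => ?_⟩
    obtain ⟨x, hx⟩ := heval z hz
    rw [mul_add, ← heq₁ z hz, ← heq₂ z hz, hx, hx, hx, add_apply, map_add]
  smul_mem' := by
    rintro c Λ ⟨h, hh, heq⟩
    refine ⟨fun z => (starRingEnd ℂ) c * h z, hh.const_mul _, fun z hz => ?_⟩
    obtain ⟨x, hx⟩ := heval z hz
    rw [mul_left_comm, ← heq z hz, hx, hx, smul_apply, smul_eq_mul, map_mul]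

theorem hasLogMajorant_of_cauchyDualFn_eq {p C R : ℝ} {ϑ h : ℂ → ℂ} {Λ : StrongDual ℂ X}
    (hp : 0 < p) (hHp : MemHp p (cauchyDualFn e Λ))
    (hnorm : hardyNorm p (cauchyDualFn e Λ) ≤ C * ‖Λ‖) (hϑ : IsInner ϑ) (hh : MemSmirnov h)
    (heq : ∀ z ∈ uDisc, cauchyDualFn e Λ z = ϑ z * h z) (hR : ‖Λ‖ ≤ R) :
    HasLogMajorant (2 / p * √((|C| * R) ^ (min 1 (1 / p))⁻¹)) h := by
  refine hh.hasLogMajorant_of_hMean_le hp hϑ fun r hr => ?_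
  have hmean : hMean p (fun z => ϑ z * h z) r = hMean p (cauchyDualFn e Λ) r := by
    simp only [hMean, heq _ (ofReal_mul_bpt_mem_uDisc hr.1.le hr.2 _)]
  rw [hmean]
  refine hMean_le_rpow_of_hardyNorm_le hp hHp (hnorm.trans ?_) hr
  gcongr
  exact le_abs_self C

theorem isClosed_innerMulSmirnov_inter_closedBall {p C : ℝ} {ϑ : ℂ → ℂ}
    (hp : 0 < p) (hdual : ∀ Λ : StrongDual ℂ X, MemHp p (cauchyDualFn e Λ) ∧
      hardyNorm p (cauchyDualFn e Λ) ≤ C * ‖Λ‖) (hϑ : IsInner ϑ)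
    (heval : ∀ z ∈ uDisc, ∃ x, ∀ Λ : StrongDual ℂ X, cauchyDualFn e Λ z = (starRingEnd ℂ) (Λ x))
    (R : ℝ) : IsClosed (WeakDual.toStrongDual ⁻¹'
      (innerMulSmirnov e ϑ heval ∩ closedBall (0 : StrongDual ℂ X) R)) := by
  refine isClosed_iff_ultrafilter.2 fun Λ 𝒰 hle hmem => ⟨?_, ?_⟩
  · refine exists_memSmirnov_of_tendsto 𝒰
      (F := fun Φ => cauchyDualFn e (WeakDual.toStrongDual Φ))
      (K := 2 / p * √((|C| * R) ^ (min 1 (1 / p))⁻¹)) hϑ (hdual _).1.1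
      (eventually_of_mem hmem ?_) fun z hz => ?_
    · rintro Φ ⟨⟨h, hh, heq⟩, hΦ⟩
      exact ⟨h, hasLogMajorant_of_cauchyDualFn_eq hp (hdual _).1 (hdual _).2 hϑ hh heq
        (mem_closedBall_zero_iff.1 hΦ), heq⟩
    · obtain ⟨x, hx⟩ := heval z hz
      simp only [hx]
      exact ((Complex.continuous_conj.comp (WeakDual.eval_continuous x)).tendsto Λ).mono_left hle
  · exact (WeakDual.isClosed_closedBall (0 : StrongDual ℂ X) R).mem_of_tendsto hle
      (eventually_of_mem hmem fun Φ hΦ => hΦ.2)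

theorem Xdual_inter_theta_Smirnov_wstar_closed_general [CompleteSpace X] {p C : ℝ} {ϑ : ℂ → ℂ}
    (he0 : e 0 ≠ 0) (hp : 0 < p) (hdual : ∀ Λ : StrongDual ℂ X,
      MemHp p (cauchyDualFn e Λ) ∧ hardyNorm p (cauchyDualFn e Λ) ≤ C * ‖Λ‖) (hϑ : IsInner ϑ) :
    wstarClosure {Λ : StrongDual ℂ X | ∃ h, MemSmirnov h ∧
        ∀ z ∈ uDisc, cauchyDualFn e Λ z = ϑ z * h z} ⊆
      {Λ | ∃ h, MemSmirnov h ∧ ∀ z ∈ uDisc, cauchyDualFn e Λ z = ϑ z * h z} := by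
  have heval : ∀ z ∈ uDisc, ∃ x, ∀ Λ : StrongDual ℂ X,
      cauchyDualFn e Λ z = (starRingEnd ℂ) (Λ x) := fun z hz =>
    exists_forall_cauchyDualFn_eq_conj_apply he0 (fun Λ => (hdual Λ).1.1) hz
  exact wstarClosure_subset_of_forall_isClosed
    (isClosed_innerMulSmirnov_inter_closedBall hp hdual hϑ heval)

end CauchyDual

/-- if the Cauchy dual `X'` embeds continuously in some `H^p`, `p > 0`,
then for every inner function `ϑ` the set `X' ∩ ϑ𝒩⁺ = {f ∈ X' : f/ϑ ∈ 𝒩⁺}` is weak-star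
closed in `X'`. -/
theorem Xdual_inter_theta_Smirnov_wstar_closed
    {X : Type*} [NormedAddCommGroup X] [NormedSpace ℂ X] [CompleteSpace X]
    (T : X →ₗ[ℂ] (ℂ → ℂ)) (hinj : Function.Injective T)
    (han : ∀ x : X, AnalyticOnDisc (T x))
    (e : ℕ → X) (he : ∀ n : ℕ, T (e n) = fun z => z ^ n)
    (hpolydense : Dense {x : X | ∃ q : Polynomial ℂ, T x = fun z => q.eval z})
    (hmono : Filter.limsup (fun n : ℕ => ‖e n‖ ^ (1 / (n : ℝ))) Filter.atTop ≤ 1)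
    (hH2 : ∀ x : X, MemHp 2 (T x))
    (hembed : ∃ C : ℝ, 0 < C ∧ ∀ x : X, hardyNorm 2 (T x) ≤ C * ‖x‖)
    (hdual : ∃ p : ℝ, 0 < p ∧ ∃ C : ℝ, 0 < C ∧ ∀ Λ : X →L[ℂ] ℂ,
      MemHp p (cauchyDualFn e Λ) ∧ hardyNorm p (cauchyDualFn e Λ) ≤ C * ‖Λ‖)
    (ϑ : ℂ → ℂ) (hϑ : IsInner ϑ) :
    wstarClosure {Λ : X →L[ℂ] ℂ | ∃ h : ℂ → ℂ, MemSmirnov h ∧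
        ∀ z ∈ uDisc, cauchyDualFn e Λ z = ϑ z * h z} ⊆
      {Λ : X →L[ℂ] ℂ | ∃ h : ℂ → ℂ, MemSmirnov h ∧
        ∀ z ∈ uDisc, cauchyDualFn e Λ z = ϑ z * h z} := by
  obtain ⟨p, hp, C, -, hdual⟩ := hdual
  have he0 : e 0 ≠ 0 := fun h => by simpa [h] using congrFun (he 0) 0
  exact Xdual_inter_theta_Smirnov_wstar_closed_general he0 hp hdual hϑ
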